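/- Let R = k[x_1,…,x_d] with d ≥ 3 and let E be a torsion-free R-module of rank e and projective dimension one with μ(E) = d+e, minimal free resolution 0 → R^d →φ R^{d+e} → E → 0 where φ = [φ′ | φ″] with φ′ having d−2 columns of linear forms and φ″ two columns of quadrics, I_1(φ) = (x_1,…,x_d), and E satisfying G_d. Let A = H^0_m(S(E)) with m = (x_1,…,x_d), and let σ = B(φ′) be the d×(d−2) Jacobian dual of φ′. If ht I(σ) = 3, then the T-module A_1 is minimally generated by d equations of bidegree (1, 2d−2). -/

import Mathlib

/-!
STATEMENT 10: With `R`, `E`, `φ` as in Statement 7, `A = H⁰_m(S(E))` and `σ = B(φ′)`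
the Jacobian dual of the linear part: if `ht I(σ) = 3` then the `T`-module `A_1` is
minimally generated by `d` equations of bidegree `(1, 2d−2)`.
-/

open MvPolynomial

noncomputable section

namespace Stmt10

variable (k : Type) [Field k] (d n : ℕ)

/-- `B = R ⊗_k T = k[x_1,…,x_d,y_1,…,y_n]`. -/
abbrev B := MvPolynomial (Fin d ⊕ Fin n) k

/-- `T = k[y_1,…,y_n]`. -/
abbrev T := MvPolynomial (Fin n) k

/-- `B` is a `T`-algebra via `y_j ↦ y_j`. -/
instance : Algebra (T k n) (B k d n) :=
  ((rename Sum.inr : T k n →ₐ[k] B k d n).toRingHom).toAlgebra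

/-- The bigrading weight: `bideg x_i = (1,0)`, `bideg y_j = (0,1)`. -/
def bwt : (Fin d ⊕ Fin n) → ℕ × ℕ := Sum.elim (fun _ => (1, 0)) (fun _ => (0, 1))

/-- The `x`-degree weight. -/
def wx : (Fin d ⊕ Fin n) → ℕ := Sum.elim (fun _ => 1) (fun _ => 0)

/-- The ideal `m = (x_1,…,x_d)B`. -/
def mxB : Ideal (B k d n) := Ideal.span (Set.range fun i : Fin d => (X (Sum.inl i) : B k d n))

variable (I : Ideal (B k d n))

/-- `A = H⁰_m(S)`: elements of `S = B/I` annihilated by a power of `m`. -/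
def H0 : Submodule (B k d n) (B k d n ⧸ I) :=
  ⨆ N : ℕ, Submodule.torsionBySet (B k d n) (B k d n ⧸ I)
    ((mxB k d n ^ N : Ideal (B k d n)) : Set (B k d n))

/-- The bigraded component of `S = B/I` in bidegree `p`. -/
def Scomp (p : ℕ × ℕ) : Submodule k (B k d n ⧸ I) :=
  (weightedHomogeneousSubmodule k (bwt d n) p).map (Ideal.Quotient.mkₐ k I).toLinearMap

/-- The graded strand `S_j = ⊕_b S_{(j,b)}` of `S` in `x`-degree `j`, as a `T`-module. -/
def SxDeg (j : ℕ) : Submodule (T k n) (B k d n ⧸ I) :=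
  Submodule.span (T k n) ((Ideal.Quotient.mk I) '' {g : B k d n | g.IsWeightedHomogeneous (wx d n) j})

/-- The graded strand of `S` in (possibly negative) `x`-degree `i : ℤ`. -/
def SxDegZ (i : ℤ) : Submodule (T k n) (B k d n ⧸ I) :=
  if 0 ≤ i then SxDeg k d n I i.toNat else ⊥

/-- The graded strand `A_i = ⊕_b A_{(i,b)}` of `A = H⁰_m(S)`, as a `T`-module. -/
def AcompZ (i : ℤ) : Submodule (T k n) (B k d n ⧸ I) :=
  (H0 k d n I).restrictScalars (T k n) ⊓ SxDegZ k d n I i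

/-- The graded component of `T` in (possibly negative) degree `j`. -/
def TcompZ (j : ℤ) : Submodule k (T k n) :=
  if 0 ≤ j then homogeneousSubmodule (Fin n) k j.toNat else ⊥

/-- The ideal of `t × t` minors of a matrix. -/
def minorsIdeal {R : Type} [CommRing R] {m' n' : Type} (M : Matrix m' n' R) (t : ℕ) :
    Ideal R :=
  Ideal.span {x | ∃ (f : Fin t → m') (g : Fin t → n'), x = (M.submatrix f g).det}

/-- `ht I ≥ c`: every prime containing `I` has height (= dimension of the localization)
at least `c`. -/
def htGE {R : Type} [CommRing R] (I : Ideal R) (c : ℕ) : Prop :=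
  ∀ (p : Ideal R) (_ : p.IsPrime), I ≤ p →
    (c : WithBot ℕ∞) ≤ ringKrullDim (Localization.AtPrime p)

/-!
Write `S = T[x] / (x σ, x · U x, x · V x)`, so that `S_1` is the cokernel of `σ`, and let the
bracket `[w, w']` be the determinant of `σ` with two further columns `w`, `w'` adjoined.
Multiplying a bracket by an element of `S_1` turns it into a combination of brackets, which gives
`x · [U x, V x] = 0` in `S` as well as, for every `τ ∈ T^d`, an element `x · G(τ)` of `S_1` with
`(x · s) (x · G(τ)) = [τ, s] [U x, V x]`. Hence `(x)^2` kills `x · G(τ)`, which therefore lies in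
`A_1`; for constant `τ` its bidegree is `(1, 2d - 2)`.

Over a localization `O` of `T` in which some bracket is invertible, `S` becomes `O[X_0, X_1]`
modulo two quadrics. They form a regular pair because `G_d` bounds the height of the defining
ideal of `S` below by `d`. By linkage, everything killed by a power of `(X_0, X_1)` is, in degree
two, a multiple of the determinant of the matrix expressing the quadrics through `X_0, X_1`, which
is `[U x, V x]` up to a unit; from this one reads off that `A_1` is the image of `G` over `O`, and
that `G(τ) ∈ im σ` only if `τ ∈ im σ`.

The brackets generate an ideal of height at least three, while the primes associated to an ideal
of `T` generated by a regular pair have height at most two. This removes the denominators, so that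
`A_1` is the isomorphic image of the cokernel of `σ` under `G`, and a cokernel of a matrix of
linear forms of size `d × (d - 2)` needs `d` generators.
-/

section Unmixedness

open scoped Polynomial

/-- `f, g` is a weakly regular sequence in a domain, in elementary form. -/
structure IsRegularPair {A : Type*} [CommRing A] (f g : A) : Prop where
  ne_zero : f ≠ 0
  dvd_of_dvd_mul : ∀ h, f ∣ g * h → f ∣ h

theorem IsRegularPair.exists_eq_mul {A : Type*} [CommRing A] [IsDomain A] {f g x y : A}
    (hfg : IsRegularPair f g) (hxy : x * f = y * g) : ∃ c, y = c * f ∧ x = c * g := by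
  obtain ⟨c, rfl⟩ := hfg.dvd_of_dvd_mul y ⟨x, by linear_combination -hxy⟩
  exact ⟨c, mul_comm f c, mul_right_cancel₀ hfg.ne_zero (by linear_combination hxy)⟩

theorem IsRegularPair.of_forall_prime_not_dvd {A : Type*} [CommRing A]
    [UniqueFactorizationMonoid A] {f g : A} (hf : f ≠ 0)
    (h : ∀ p, Prime p → p ∣ f → ¬p ∣ g) : IsRegularPair f g := by
  have hfg : IsRelPrime f g :=
    (UniqueFactorizationMonoid.isRelPrime_iff_no_prime_factors hf).2
      fun p hpf hpg hp => h p hp hpf hpg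
  exact ⟨hf, fun _ => hfg.dvd_of_dvd_mul_left⟩

theorem IsRegularPair.polynomial_C {A : Type*} [CommRing A] {a b : A} (h : IsRegularPair a b) :
    IsRegularPair (Polynomial.C a) (Polynomial.C b) := by
  refine ⟨Polynomial.C_ne_zero.2 h.ne_zero, fun F hF => ?_⟩
  simp only [Polynomial.C_dvd_iff_dvd_coeff, Polynomial.coeff_C_mul] at hF ⊢
  exact fun i => h.dvd_of_dvd_mul _ (hF i)

theorem IsRegularPair.map_equiv {A A' : Type*} [CommRing A] [CommRing A'] (e : A ≃+* A')
    {f g : A} (h : IsRegularPair f g) : IsRegularPair (e f) (e g) := by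
  refine ⟨by simpa using h.ne_zero, fun x hx => ?_⟩
  have hdvd : f ∣ e.symm x := h.dvd_of_dvd_mul _ (by simpa using map_dvd e.symm hx)
  simpa using map_dvd e hdvd

theorem exists_isRegularPair_of_two_le_height {A : Type*} [CommRing A] [IsDomain A]
    [UniqueFactorizationMonoid A] [IsNoetherianRing A] (J : Ideal A) (hJ : 2 ≤ J.height) :
    ∃ f ∈ J, ∃ g ∈ J, IsRegularPair f g := by
  classical
  have hJ0 : J ≠ ⊥ := by rintro rfl; simp [Ideal.height_bot] at hJ
  obtain ⟨f, hfJ, hf0⟩ := Submodule.exists_mem_ne_zero_of_ne_bot hJ0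
  let s := (UniqueFactorizationMonoid.factors f).toFinset
  have hs : ∀ p ∈ s, Prime p := fun p hp =>
    UniqueFactorizationMonoid.prime_of_factor p (Multiset.mem_toFinset.1 hp)
  have havoid : ¬(J : Set A) ⊆ ⋃ p ∈ (s : Set A), (Ideal.span {p} : Ideal A) := by
    rw [Ideal.subset_union_prime 0 0
      fun p hp _ _ => (Ideal.span_singleton_prime (hs p hp).ne_zero).2 (hs p hp)]
    rintro ⟨p, hp, hle⟩
    have hle_one := Ideal.height_span_singleton_le_one (hs p hp).not_isUnit
    exact absurd ((hJ.trans (Ideal.height_mono hle)).trans hle_one) (by decide)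
  obtain ⟨g, hgJ, hg⟩ := Set.not_subset.1 havoid
  refine ⟨f, hfJ, g, hgJ, .of_forall_prime_not_dvd hf0 fun p hp hpf hpg => hg ?_⟩
  obtain ⟨q, hq, hpq⟩ := UniqueFactorizationMonoid.exists_mem_factors_of_dvd hf0 hp.irreducible hpf
  exact Set.mem_biUnion (Multiset.mem_toFinset.2 hq)
    (Ideal.mem_span_singleton.2 (hpq.symm.dvd.trans hpg))

/-- The unmixedness property of `A` for ideals generated by two elements: the primes associated to
`A ⧸ (f, g)`, for a regular pair `f, g`, have height at most two. Associated primes are encoded as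
those colon ideals `(f, g) : z` which are prime. -/
def IsPairUnmixed (A : Type*) [CommRing A] : Prop :=
  ∀ ⦃f g z : A⦄, IsRegularPair f g →
    ((Ideal.span {f, g}).colon {z}).IsPrime → ((Ideal.span {f, g}).colon {z}).height ≤ 2

theorem exists_le_colon_isPrime {A : Type*} [CommRing A] [IsNoetherianRing A]
    {I : Ideal A} {z : A} (hz : z ∉ I) :
    ∃ w, I.colon {z} ≤ I.colon {w} ∧ (I.colon {w}).IsPrime := by
  have colon_mk (y : A) :
      (⊥ : Submodule A (A ⧸ I)).colon {Ideal.Quotient.mk I y} = I.colon {y} := by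
    ext r
    simp only [Submodule.mem_colon_singleton, Submodule.mem_bot]
    exact Ideal.Quotient.eq_zero_iff_mem
  obtain ⟨P, hP, hle⟩ := exists_le_isAssociatedPrime_of_isNoetherianRing A
    (Ideal.Quotient.mk I z) (by rwa [Ne, Ideal.Quotient.eq_zero_iff_mem])
  obtain ⟨hPprime, w, rfl⟩ := isAssociatedPrime_iff.1 hP
  obtain ⟨w, rfl⟩ := Ideal.Quotient.mk_surjective w
  rw [colon_mk] at hle hPprime
  exact ⟨w, by rwa [colon_mk] at hle, hPprime⟩

theorem IsPairUnmixed.mem_span_of_three_le_height {A : Type*} [CommRing A] [IsNoetherianRing A]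
    (hA : IsPairUnmixed A) {f g z : A} (hfg : IsRegularPair f g) {J : Ideal A} (hJ : 3 ≤ J.height)
    (hJz : ∀ r ∈ J, r * z ∈ Ideal.span {f, g}) : z ∈ Ideal.span {f, g} := by
  by_contra hz
  obtain ⟨w, hle, hw⟩ := exists_le_colon_isPrime hz
  have hJw : J ≤ (Ideal.span {f, g}).colon {w} :=
    le_trans (fun r hr => Submodule.mem_colon_singleton.2 (hJz r hr)) hle
  exact absurd ((hJ.trans (Ideal.height_mono hJw)).trans (hA hfg hw)) (by decide)

theorem IsPairUnmixed.of_field (K : Type*) [Field K] : IsPairUnmixed K := by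
  intro f g z hfg hprime
  have htop : Ideal.span {f, g} = ⊤ :=
    Ideal.eq_top_of_isUnit_mem _ (Ideal.subset_span (Set.mem_insert f {g})) hfg.ne_zero.isUnit
  exact absurd (by rw [htop, Submodule.top_colon]) hprime.ne_top

theorem IsPairUnmixed.of_equiv {A A' : Type*} [CommRing A] [CommRing A'] (e : A ≃+* A')
    (hA : IsPairUnmixed A) : IsPairUnmixed A' := by
  intro f g z hfg hprime
  have hcolon : ((Ideal.span {f, g}).colon {z}).comap e =
      (Ideal.span {e.symm f, e.symm g}).colon {e.symm z} := by
    ext r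
    simp only [Ideal.mem_comap, Submodule.mem_colon_singleton, smul_eq_mul, Ideal.mem_span_pair]
    constructor
    · rintro ⟨a, b, hab⟩
      exact ⟨e.symm a, e.symm b, e.injective (by simpa using hab)⟩
    · rintro ⟨a, b, hab⟩
      exact ⟨e a, e b, e.symm.injective (by simpa using hab)⟩
  rw [← e.height_comap, hcolon]
  exact hA (hfg.map_equiv e.symm) (hcolon ▸ Ideal.comap_isPrime e _)

/-- Linkage: `μ` represents the image of `z` under an isomorphism between the part of `A ⧸ (f, g)`
killed by `a, b` and the part of `A ⧸ (a, b)` killed by `f, g`. -/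
theorem IsRegularPair.exists_linked {A : Type*} [CommRing A] [IsDomain A] {f g a b z : A}
    (hfg : IsRegularPair f g) (hab : IsRegularPair a b)
    (ha : a * z ∈ Ideal.span {f, g}) (hb : b * z ∈ Ideal.span {f, g}) :
    ∃ μ : A, (∀ r, r * z ∈ Ideal.span {f, g} → r * μ ∈ Ideal.span {a, b}) ∧
      (μ ∈ Ideal.span {a, b} → z ∈ Ideal.span {f, g}) := by
  simp only [Ideal.mem_span_pair] at ha hb ⊢
  obtain ⟨α, β, haz⟩ := ha
  obtain ⟨γ, δ, hbz⟩ := hb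
  obtain ⟨μ, hμf, hμg⟩ := hfg.exists_eq_mul (x := b * α - a * γ) (y := a * δ - b * β)
    (by linear_combination b * haz - a * hbz)
  refine ⟨μ, ?_, ?_⟩
  · rintro r ⟨ε, ζ, hrz⟩
    obtain ⟨ν, hν, -⟩ := hfg.exists_eq_mul (x := a * ε - r * α) (y := r * β - a * ζ)
      (by linear_combination a * hrz - r * haz)
    obtain ⟨ν', hν', -⟩ := hfg.exists_eq_mul (x := b * ε - r * γ) (y := r * δ - b * ζ)
      (by linear_combination b * hrz - r * hbz)
    exact ⟨ν', -ν, mul_right_cancel₀ hfg.ne_zero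
      (by linear_combination -a * hν' + b * hν + r * hμf)⟩
  · rintro ⟨ρ, ρ', hρ⟩
    obtain ⟨ω, hω, -⟩ := hab.exists_eq_mul (x := γ + ρ * g) (y := α - ρ' * g)
      (by linear_combination -hμg + g * hρ)
    obtain ⟨ω', hω', -⟩ := hab.exists_eq_mul (x := δ - ρ * f) (y := β + ρ' * f)
      (by linear_combination hμf - f * hρ)
    exact ⟨ω, ω', mul_left_cancel₀ hab.ne_zero (by linear_combination haz - f * hω - g * hω')⟩

attribute [local instance] Polynomial.algebra Polynomial.isLocalization in
theorem height_le_height_comap_C_add_one {A : Type*} [CommRing A] [IsNoetherianRing A]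
    (P : Ideal A[X]) [P.IsPrime] : P.height ≤ (P.comap Polynomial.C).height + 1 := by
  set p := P.comap Polynomial.C
  have : p.IsPrime := Ideal.comap_isPrime _ _
  have : P.LiesOver p := ⟨rfl⟩
  let Ap := Localization.AtPrime p
  let p' : Ideal Ap := p.map (algebraMap A Ap)
  let P' : Ideal Ap[X] := P.map (algebraMap A[X] Ap[X])
  have hdisj : Disjoint (p.primeCompl.map Polynomial.C : Set A[X]) P :=
    Set.disjoint_left.2 fun _ ⟨_, hb, hba⟩ ha => hb (Ideal.mem_comap.2 (hba ▸ ha))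
  have hP' : P'.IsPrime :=
    IsLocalization.isPrime_of_isPrime_disjoint (p.primeCompl.map Polynomial.C) _ _ ‹_› hdisj
  have hp'max : p'.IsMaximal := by
    rw [show p' = _ from Localization.AtPrime.map_eq_maximalIdeal]
    exact IsLocalRing.maximalIdeal.isMaximal Ap
  have hP'over : P'.LiesOver p' :=
    IsLocalization.liesOver_of_isPrime_of_disjoint p.primeCompl _ _ hdisj
  obtain ⟨M, hM, hP'M⟩ := Ideal.exists_le_maximal P' hP'.ne_top
  have : M.LiesOver p' :=
    ⟨hp'max.eq_of_le (Ideal.comap_isPrime _ _).ne_top (hP'over.over ▸ Ideal.comap_mono hP'M)⟩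
  calc
    P.height = P'.height :=
      (IsLocalization.height_map_of_disjoint (p.primeCompl.map Polynomial.C) _ hdisj).symm
    _ ≤ M.height := Ideal.height_mono hP'M
    _ = p'.height + 1 := Polynomial.height_eq_height_add_one p' M
    _ = p.height + 1 := by
      rw [IsLocalization.height_map_of_disjoint p.primeCompl _ (Set.disjoint_left.2 fun _ h => h)]

theorem height_map_C_of_isPrime {A : Type*} [CommRing A] [IsNoetherianRing A]
    (p : Ideal A) [p.IsPrime] : (p.map Polynomial.C).height = p.height := by
  have : (p.map Polynomial.C).IsPrime := Ideal.isPrime_map_C_of_isPrime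
  have : (p.map Polynomial.C).LiesOver p := ⟨by
    ext x
    simp [Ideal.mem_map_C_iff, Ideal.under, Polynomial.coeff_C, apply_ite]⟩
  simp [Ideal.height_eq_height_add_of_liesOver_of_hasGoingDown p]

theorem exists_coeff_notMem_forall_gt_mem {A : Type*} [CommRing A] {I : Ideal A} {F : A[X]}
    (hF : F ∉ I.map Polynomial.C) :
    ∃ i, F.coeff i ∉ I ∧ ∀ j, i < j → F.coeff j ∈ I := by
  have hF0 : F.map (Ideal.Quotient.mk I) ≠ 0 := fun h => hF <| Ideal.mem_map_C_iff.2 fun n => by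
    simpa [Ideal.Quotient.eq_zero_iff_mem] using congrArg (Polynomial.coeff · n) h
  refine ⟨(F.map (Ideal.Quotient.mk I)).natDegree, fun h => ?_, fun j hj => ?_⟩
  · rw [← Ideal.Quotient.eq_zero_iff_mem, ← Polynomial.coeff_map] at h
    exact hF0 (Polynomial.leadingCoeff_eq_zero.1 h)
  · rw [← Ideal.Quotient.eq_zero_iff_mem, ← Polynomial.coeff_map]
    exact Polynomial.coeff_eq_zero_of_natDegree_lt hj

theorem exists_notMem_mul_coeff_mem {A : Type*} [CommRing A] {p q : Ideal A} {F μ : A[X]}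
    (hF : F ∉ p.map Polynomial.C) (hμ : μ ∉ q.map Polynomial.C)
    (hFμ : F * μ ∈ q.map Polynomial.C) (hpμ : ∀ r ∈ p, ∀ n, r * μ.coeff n ∈ q) :
    ∃ s ∉ p, ∃ j, μ.coeff j ∉ q ∧ s * μ.coeff j ∈ q := by
  obtain ⟨i, hi, hi_max⟩ := exists_coeff_notMem_forall_gt_mem hF
  obtain ⟨j, hj, hj_max⟩ := exists_coeff_notMem_forall_gt_mem hμ
  refine ⟨F.coeff i, hi, j, hj, ?_⟩
  have hcoeff := Ideal.mem_map_C_iff.1 hFμ (i + j)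
  rw [Polynomial.coeff_mul, ← Finset.add_sum_erase _ _
    (show (i, j) ∈ Finset.HasAntidiagonal.antidiagonal (i + j) from
      Finset.HasAntidiagonal.mem_antidiagonal.2 rfl)] at hcoeff
  refine (Ideal.add_mem_iff_left _ (Ideal.sum_mem _ fun x hx => ?_)).1 hcoeff
  simp only [Finset.mem_erase, Finset.HasAntidiagonal.mem_antidiagonal] at hx
  obtain ⟨hne, hsum⟩ := hx
  rcases lt_trichotomy x.1 i with hlt | heq | hgt
  · exact Ideal.mul_mem_left _ _ (hj_max _ (by omega))
  · exact absurd (Prod.ext heq (by dsimp only; omega)) hne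
  · exact hpμ _ (hi_max _ hgt) _

theorem three_le_height_sup_span {A : Type*} [CommRing A] {p : Ideal A} [p.IsPrime]
    (hp : 2 ≤ p.height) {s : A} (hs : s ∉ p) : 3 ≤ (p ⊔ Ideal.span {s}).height := by
  rw [Ideal.height_eq_inf_minimalPrimes]
  refine le_iInf₂ fun Q hQ => ?_
  have hQprime : Q.IsPrime := hQ.1.1
  have hle : p ⊔ Ideal.span {s} ≤ Q := hQ.1.2
  have hlt : p < Q := lt_of_le_of_ne (le_sup_left.trans hle) fun h =>
    hs (h ▸ hle (Ideal.mem_sup_right (Ideal.mem_span_singleton_self s)))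
  calc
    (3 : ℕ∞) = 2 + 1 := by norm_num
    _ ≤ p.height + 1 := by gcongr
    _ ≤ Q.height := Ideal.height_add_one_le_of_lt_of_isPrime hlt

theorem IsPairUnmixed.polynomial {A : Type*} [CommRing A] [IsDomain A]
    [UniqueFactorizationMonoid A] [IsNoetherianRing A] (hA : IsPairUnmixed A) :
    IsPairUnmixed A[X] := by
  intro f g z hfg hP
  set P := (Ideal.span {f, g}).colon {z}
  have mem_P {r : A[X]} : r ∈ P ↔ r * z ∈ Ideal.span {f, g} := Submodule.mem_colon_singleton
  by_contra hP2
  set p := P.comap Polynomial.C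
  have hpprime : p.IsPrime := Ideal.comap_isPrime _ _
  have hP3 : 2 + 1 ≤ P.height := Order.add_one_le_of_lt (not_le.1 hP2)
  have hp2 : 2 ≤ p.height :=
    (ENat.add_le_add_iff_right ENat.one_ne_top).1
      (hP3.trans (height_le_height_comap_C_add_one P))
  obtain ⟨a, ha, b, hb, hab⟩ := exists_isRegularPair_of_two_le_height p hp2
  obtain ⟨μ, hμ, hzμ⟩ := hfg.exists_linked hab.polynomial_C (mem_P.1 ha) (mem_P.1 hb)
  have hmap : Ideal.span {Polynomial.C a, Polynomial.C b} =
      (Ideal.span {a, b}).map Polynomial.C := by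
    rw [Ideal.map_span, Set.image_pair]
  rw [hmap] at hμ hzμ
  have hμ_notMem : μ ∉ (Ideal.span {a, b}).map Polynomial.C := fun h =>
    hP.ne_top ((Ideal.eq_top_iff_one _).2 (mem_P.2 (by simpa using hzμ h)))
  have hpμ : ∀ r ∈ p, ∀ n, r * μ.coeff n ∈ Ideal.span {a, b} := fun r hr n => by
    simpa using Ideal.mem_map_C_iff.1 (hμ _ (mem_P.1 hr)) n
  by_cases hp3 : 2 + 1 ≤ p.height
  · exact hμ_notMem (Ideal.mem_map_C_iff.2 fun n =>
      hA.mem_span_of_three_le_height hab hp3 fun r hr => hpμ r hr n)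
  · have hPp : ¬P ≤ p.map Polynomial.C := fun hle =>
      hp3 (by simpa only [height_map_C_of_isPrime] using hP3.trans (Ideal.height_mono hle))
    obtain ⟨F, hFP, hFp⟩ := Set.not_subset.1 hPp
    obtain ⟨s, hs, j, hj, hsj⟩ :=
      exists_notMem_mul_coeff_mem hFp hμ_notMem (hμ F (mem_P.1 hFP)) hpμ
    refine hj (hA.mem_span_of_three_le_height hab (three_le_height_sup_span hp2 hs) fun r hr => ?_)
    suffices p ⊔ Ideal.span {s} ≤ (Ideal.span {a, b}).colon {μ.coeff j} from
      Submodule.mem_colon_singleton.1 (this hr)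
    exact sup_le (fun r hr => Submodule.mem_colon_singleton.2 (hpμ r hr j))
      ((Ideal.span_singleton_le_iff_mem _).2 (Submodule.mem_colon_singleton.2 hsj))

theorem IsPairUnmixed.mvPolynomial (K : Type*) [Field K] (n : ℕ) :
    IsPairUnmixed (MvPolynomial (Fin n) K) := by
  induction n with
  | zero => exact (IsPairUnmixed.of_field K).of_equiv (isEmptyRingEquiv K (Fin 0)).symm
  | succ n ih => exact ih.polynomial.of_equiv (finSuccEquiv K n).symm.toRingEquiv

end Unmixedness

section Bracket

open Matrix

variable {A A' : Type*} [CommRing A] [CommRing A'] {m : ℕ}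

/-- The bracket `[w, w']`: the determinant of the square matrix obtained from `σ` by adjoining the
columns `w` and `w'` (written with rows in place of columns). -/
def bracket (σ : Matrix (Fin (m + 2)) (Fin m) A) :
    (Fin (m + 2) → A) →ₗ[A] (Fin (m + 2) → A) →ₗ[A] A :=
  LinearMap.mk₂ A (fun w w' => (detRowAlternating.curryLeft w).curryLeft w' σ.col)
    (by simp) (by simp) (by simp) (by simp)

theorem bracket_apply (σ : Matrix (Fin (m + 2)) (Fin m) A) (w w' : Fin (m + 2) → A) :
    bracket σ w w' = det (of (vecCons w (vecCons w' σ.col))) := rfl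

theorem bracket_self (σ : Matrix (Fin (m + 2)) (Fin m) A) (w : Fin (m + 2) → A) :
    bracket σ w w = 0 :=
  congrArg (· σ.col) (AlternatingMap.curryLeft_same detRowAlternating w)

theorem bracket_swap (σ : Matrix (Fin (m + 2)) (Fin m) A) (w w' : Fin (m + 2) → A) :
    bracket σ w w' = -bracket σ w' w := by
  have h := bracket_self σ (w + w')
  simp only [map_add, LinearMap.add_apply, bracket_self] at h
  linear_combination h

theorem bracket_col (σ : Matrix (Fin (m + 2)) (Fin m) A) (j : Fin m) (w : Fin (m + 2) → A) :
    bracket σ (σ.col j) w = 0 :=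
  det_zero_of_row_eq (i := 0) (j := j.succ.succ) (by simp [Fin.ext_iff]) rfl

theorem bracket_mulVec_left (σ : Matrix (Fin (m + 2)) (Fin m) A) (p : Fin m → A)
    (w : Fin (m + 2) → A) : bracket σ (σ *ᵥ p) w = 0 := by
  have hcol (j : Fin m) : bracket σ (σᵀ j) w = 0 := bracket_col σ j w
  simp [mulVec_eq_sum, hcol]

theorem bracket_mulVec_right (σ : Matrix (Fin (m + 2)) (Fin m) A) (p : Fin m → A)
    (w : Fin (m + 2) → A) : bracket σ w (σ *ᵥ p) = 0 := by
  rw [bracket_swap, bracket_mulVec_left, neg_zero]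

theorem exists_bracket_smul_eq (σ : Matrix (Fin (m + 2)) (Fin m) A) (w₁ w₂ w : Fin (m + 2) → A) :
    ∃ p, bracket σ w₁ w₂ • w = bracket σ w w₂ • w₁ + bracket σ w₁ w • w₂ + σ *ᵥ p := by
  set M := of (vecCons w₁ (vecCons w₂ σ.col))
  have update_zero (v : Fin (m + 2) → A) {l : ℕ} (M : Fin l → Fin (m + 2) → A) :
      Function.update (vecCons v M) 0 w = vecCons w M :=
    Fin.update_cons_zero (α := fun _ => Fin (m + 2) → A) v M w
  have cramer_zero : Mᵀ.cramer w 0 = bracket σ w w₂ := by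
    rw [cramer_transpose_apply, bracket_apply]
    congr 1
    exact congrArg of (update_zero _ _)
  have cramer_one : Mᵀ.cramer w 1 = bracket σ w₁ w := by
    rw [cramer_transpose_apply, bracket_apply]
    congr 1
    exact congrArg of ((Fin.cons_update (α := fun _ => Fin (m + 2) → A) _ _ 0 w).symm.trans
      (congrArg (vecCons w₁) (update_zero _ _)))
  refine ⟨fun j => Mᵀ.cramer w j.succ.succ, ?_⟩
  rw [bracket_apply, ← det_transpose, ← mulVec_cramer, mulVec_eq_sum, Fin.sum_univ_succ,
    Fin.sum_univ_succ, Fin.succ_zero_eq_one, cramer_zero, cramer_one, mulVec_eq_sum, ← add_assoc]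
  simp only [op_smul_eq_smul]
  rfl

theorem bracket_mul_dotProduct (σ : Matrix (Fin (m + 2)) (Fin m) A) {x : Fin (m + 2) → A}
    (hx : x ᵥ* σ = 0) (w₁ w₂ w : Fin (m + 2) → A) :
    bracket σ w₁ w₂ * (x ⬝ᵥ w) = bracket σ w w₂ * (x ⬝ᵥ w₁) + bracket σ w₁ w * (x ⬝ᵥ w₂) := by
  obtain ⟨p, hp⟩ := exists_bracket_smul_eq σ w₁ w₂ w
  simpa [dotProduct_add, dotProduct_smul, dotProduct_mulVec, hx] using congrArg (x ⬝ᵥ ·) hp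

theorem bracket_mul_bracket (σ : Matrix (Fin (m + 2)) (Fin m) A) (w₁ w₂ w w' : Fin (m + 2) → A) :
    bracket σ w₁ w₂ * bracket σ w w' =
      bracket σ w' w₂ * bracket σ w w₁ + bracket σ w₁ w' * bracket σ w w₂ := by
  obtain ⟨p, hp⟩ := exists_bracket_smul_eq σ w₁ w₂ w'
  simpa [bracket_mulVec_right] using congrArg (bracket σ w) hp

theorem dotProduct_mul_bracket_eq_zero (σ : Matrix (Fin (m + 2)) (Fin m) A)
    {x w₁ w₂ : Fin (m + 2) → A} (hx : x ᵥ* σ = 0) (h₁ : x ⬝ᵥ w₁ = 0) (h₂ : x ⬝ᵥ w₂ = 0)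
    (s : Fin (m + 2) → A) : (x ⬝ᵥ s) * bracket σ w₁ w₂ = 0 := by
  have h := bracket_mul_dotProduct σ hx w₁ w₂ s
  rw [h₁, h₂] at h
  linear_combination h

/-- The vector `c(τ)` representing the linear form `[τ, ·]`. -/
def bracketVec (σ : Matrix (Fin (m + 2)) (Fin m) A) :
    (Fin (m + 2) → A) →ₗ[A] (Fin (m + 2) → A) :=
  LinearMap.pi fun s => (bracket σ).flip (Pi.single s 1)

theorem bracketVec_apply (σ : Matrix (Fin (m + 2)) (Fin m) A) (τ : Fin (m + 2) → A)
    (s : Fin (m + 2)) : bracketVec σ τ s = bracket σ τ (Pi.single s 1) := rfl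

theorem dotProduct_bracketVec (σ : Matrix (Fin (m + 2)) (Fin m) A) (τ w : Fin (m + 2) → A) :
    w ⬝ᵥ bracketVec σ τ = bracket σ τ w := by
  conv_rhs => rw [pi_eq_sum_univ' w]
  simp [dotProduct, bracketVec_apply]

theorem bracketVec_mulVec (σ : Matrix (Fin (m + 2)) (Fin m) A) (p : Fin m → A) :
    bracketVec σ (σ *ᵥ p) = 0 :=
  funext fun _ => bracket_mulVec_left σ p _

theorem bracket_smul_eq (σ : Matrix (Fin (m + 2)) (Fin m) A) {x : Fin (m + 2) → A}
    (hx : x ᵥ* σ = 0) (τ s : Fin (m + 2) → A) :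
    bracket σ τ s • x = (x ⬝ᵥ s) • bracketVec σ τ - (x ⬝ᵥ τ) • bracketVec σ s := by
  ext r
  have h := bracket_mul_dotProduct σ hx τ s (Pi.single r 1)
  rw [dotProduct_single_one] at h
  simp only [Pi.smul_apply, Pi.sub_apply, smul_eq_mul, bracketVec_apply]
  linear_combination h + (x ⬝ᵥ τ) * bracket_swap σ s (Pi.single r 1)

/-- The map `G`, whose value at `τ` is the coefficient vector of an element `x · G(τ)` of `A_1`;
here `x · U x` and `x · V x` are the two quadratic generators of the symmetric algebra. -/
def generatorMap (σ : Matrix (Fin (m + 2)) (Fin m) A)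
    (U V : Matrix (Fin (m + 2)) (Fin (m + 2)) A) : (Fin (m + 2) → A) →ₗ[A] (Fin (m + 2) → A) :=
  LinearMap.pi fun t =>
    (bracket σ).flip (V.col t) ∘ₗ U.mulVecLin ∘ₗ bracketVec σ +
      bracket σ (U t) ∘ₗ V.vecMulLinear ∘ₗ bracketVec σ

theorem generatorMap_apply (σ : Matrix (Fin (m + 2)) (Fin m) A)
    (U V : Matrix (Fin (m + 2)) (Fin (m + 2)) A) (τ : Fin (m + 2) → A) (t : Fin (m + 2)) :
    generatorMap σ U V τ t =
      bracket σ (U *ᵥ bracketVec σ τ) (V.col t) + bracket σ (U t) (bracketVec σ τ ᵥ* V) := rfl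

theorem generatorMap_mulVec (σ : Matrix (Fin (m + 2)) (Fin m) A)
    (U V : Matrix (Fin (m + 2)) (Fin (m + 2)) A) (p : Fin m → A) :
    generatorMap σ U V (σ *ᵥ p) = 0 := by
  ext t
  simp [generatorMap_apply, bracketVec_mulVec]

theorem dotProduct_generatorMap (σ : Matrix (Fin (m + 2)) (Fin m) A)
    (U V : Matrix (Fin (m + 2)) (Fin (m + 2)) A) (x τ : Fin (m + 2) → A) :
    x ⬝ᵥ generatorMap σ U V τ = bracket σ (U *ᵥ bracketVec σ τ) (V *ᵥ x) +
      bracket σ (x ᵥ* U) (bracketVec σ τ ᵥ* V) := by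
  have hcol (t : Fin (m + 2)) : V.col t = Vᵀ t := rfl
  simp [mulVec_eq_sum x V, vecMul_eq_sum x U, dotProduct, generatorMap_apply, hcol, mul_add,
    Finset.sum_add_distrib]

theorem dotProduct_mul_dotProduct_generatorMap (σ : Matrix (Fin (m + 2)) (Fin m) A)
    (U V : Matrix (Fin (m + 2)) (Fin (m + 2)) A) {x : Fin (m + 2) → A} (hx : x ᵥ* σ = 0)
    (hU : x ⬝ᵥ U *ᵥ x = 0) (hV : x ⬝ᵥ V *ᵥ x = 0) (τ s : Fin (m + 2) → A) :
    (x ⬝ᵥ s) * (x ⬝ᵥ generatorMap σ U V τ) = bracket σ τ s * bracket σ (U *ᵥ x) (V *ᵥ x) := by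
  have hexpand : bracket σ τ s * bracket σ (U *ᵥ x) (V *ᵥ x) =
      (x ⬝ᵥ s) * bracket σ (U *ᵥ bracketVec σ τ) (V *ᵥ x) -
        (x ⬝ᵥ τ) * bracket σ (U *ᵥ bracketVec σ s) (V *ᵥ x) := by
    simpa [mulVec_smul, mulVec_sub] using
      congrArg (fun v => bracket σ (U *ᵥ v) (V *ᵥ x)) (bracket_smul_eq σ hx τ s)
  have hswap := bracket_mul_dotProduct σ hx (U *ᵥ bracketVec σ s) (V *ᵥ x) τ
  rw [hV, dotProduct_mulVec, dotProduct_bracketVec] at hswap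
  have hxU : x ⬝ᵥ (x ᵥ* U) = 0 := by rwa [dotProduct_comm, ← dotProduct_mulVec]
  have htransfer := bracket_mul_dotProduct σ hx s (x ᵥ* U) (bracketVec σ τ ᵥ* V)
  rw [hxU, dotProduct_comm x (_ ᵥ* V), ← dotProduct_mulVec, dotProduct_comm _ (V *ᵥ x),
    dotProduct_bracketVec, bracket_swap σ (_ ᵥ* V)] at htransfer
  rw [hexpand, dotProduct_generatorMap]
  linear_combination hswap + htransfer

theorem bracket_map (f : A →+* A') (σ : Matrix (Fin (m + 2)) (Fin m) A)
    (w w' : Fin (m + 2) → A) : bracket (σ.map f) (f ∘ w) (f ∘ w') = f (bracket σ w w') := by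
  rw [bracket_apply, bracket_apply, RingHom.map_det]
  congr 1
  ext i j
  refine Fin.cases rfl (fun i => ?_) i
  exact Fin.cases rfl (fun _ => rfl) i

theorem bracketVec_map (f : A →+* A') (σ : Matrix (Fin (m + 2)) (Fin m) A)
    (τ : Fin (m + 2) → A) : bracketVec (σ.map f) (f ∘ τ) = f ∘ bracketVec σ τ := by
  ext s
  rw [Function.comp_apply, bracketVec_apply, bracketVec_apply, ← bracket_map]
  congr 1
  ext r
  simp [Pi.single_apply, apply_ite f]

theorem generatorMap_map (f : A →+* A') (σ : Matrix (Fin (m + 2)) (Fin m) A)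
    (U V : Matrix (Fin (m + 2)) (Fin (m + 2)) A) (τ : Fin (m + 2) → A) :
    generatorMap (σ.map f) (U.map f) (V.map f) (f ∘ τ) = f ∘ generatorMap σ U V τ := by
  ext t
  have hU : U.map f *ᵥ (f ∘ bracketVec σ τ) = f ∘ (U *ᵥ bracketVec σ τ) :=
    funext fun i => (f.map_mulVec U _ i).symm
  have hV : (f ∘ bracketVec σ τ) ᵥ* V.map f = f ∘ (bracketVec σ τ ᵥ* V) :=
    funext fun i => (f.map_vecMul V _ i).symm
  rw [Function.comp_apply, generatorMap_apply, generatorMap_apply, bracketVec_map, hU, hV, map_add,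
    ← bracket_map, ← bracket_map]
  rfl

theorem dotProduct_mul_bracket_mem (Q : Ideal A) (σ : Matrix (Fin (m + 2)) (Fin m) A)
    {x w₁ w₂ : Fin (m + 2) → A} (hx : ∀ l, (x ᵥ* σ) l ∈ Q) (h₁ : x ⬝ᵥ w₁ ∈ Q) (h₂ : x ⬝ᵥ w₂ ∈ Q)
    (s : Fin (m + 2) → A) : (x ⬝ᵥ s) * bracket σ w₁ w₂ ∈ Q := by
  simp only [← Ideal.Quotient.eq_zero_iff_mem, map_mul, RingHom.map_dotProduct, RingHom.map_vecMul,
    ← bracket_map] at hx h₁ h₂ ⊢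
  exact dotProduct_mul_bracket_eq_zero _ (funext hx) h₁ h₂ _

theorem dotProduct_mul_dotProduct_generatorMap_sub_mem (Q : Ideal A)
    (σ : Matrix (Fin (m + 2)) (Fin m) A) (U V : Matrix (Fin (m + 2)) (Fin (m + 2)) A)
    {x : Fin (m + 2) → A} (hx : ∀ l, (x ᵥ* σ) l ∈ Q) (hU : x ⬝ᵥ U *ᵥ x ∈ Q)
    (hV : x ⬝ᵥ V *ᵥ x ∈ Q) (τ s : Fin (m + 2) → A) :
    (x ⬝ᵥ s) * (x ⬝ᵥ generatorMap σ U V τ) - bracket σ τ s * bracket σ (U *ᵥ x) (V *ᵥ x) ∈ Q := by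
  have map_mulVec (M : Matrix (Fin (m + 2)) (Fin (m + 2)) A) :
      Ideal.Quotient.mk Q ∘ (M *ᵥ x) = M.map (Ideal.Quotient.mk Q) *ᵥ (Ideal.Quotient.mk Q ∘ x) :=
    funext fun i => RingHom.map_mulVec _ M x i
  simp only [← Ideal.Quotient.eq_zero_iff_mem, RingHom.map_dotProduct, RingHom.map_vecMul,
    map_mulVec] at hx hU hV
  rw [← Ideal.Quotient.eq_zero_iff_mem, map_sub, map_mul, map_mul, RingHom.map_dotProduct,
    RingHom.map_dotProduct, ← generatorMap_map, ← bracket_map, ← bracket_map, map_mulVec,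
    map_mulVec, sub_eq_zero]
  exact dotProduct_mul_dotProduct_generatorMap _ _ _ (funext hx) hU hV _ _

end Bracket

section Linkage

open Matrix

variable {D : Type*} [CommRing D]

theorem mul_det_mem_span_range_vecMul {ι : Type*} [Fintype ι] [DecidableEq ι] (u : ι → D)
    (Φ : Matrix ι ι D) {c : D} (hc : c ∈ Ideal.span (Set.range u)) :
    c * Φ.det ∈ Ideal.span (Set.range (u ᵥ* Φ)) := by
  obtain ⟨r, rfl⟩ := Ideal.mem_span_range_iff_exists_fun.1 hc
  refine Ideal.mem_span_range_iff_exists_fun.2 ⟨Φ.adjugate *ᵥ r, ?_⟩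
  change (Φ.adjugate *ᵥ r) ⬝ᵥ (u ᵥ* Φ) = (r ⬝ᵥ u) * Φ.det
  rw [dotProduct_comm, ← dotProduct_mulVec, mulVec_mulVec, mul_adjugate, smul_mulVec, one_mulVec,
    dotProduct_smul, dotProduct_comm, smul_eq_mul, mul_comm]

theorem vecMul_fin_two (u : Fin 2 → D) (Φ : Matrix (Fin 2) (Fin 2) D) (j : Fin 2) :
    (u ᵥ* Φ) j = u 0 * Φ 0 j + u 1 * Φ 1 j := by
  simp [vecMul, dotProduct]

variable [IsDomain D] {u : Fin 2 → D} {Φ : Matrix (Fin 2) (Fin 2) D}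

theorem exists_sub_mul_det_mem (hu : IsRegularPair (u 0) (u 1))
    (hq : IsRegularPair ((u ᵥ* Φ) 0) ((u ᵥ* Φ) 1)) {b : D}
    (hb : ∀ i, u i * b ∈ Ideal.span (Set.range (u ᵥ* Φ))) :
    ∃ c, b - c * Φ.det ∈ Ideal.span (Set.range (u ᵥ* Φ)) := by
  obtain ⟨l, hl⟩ := Ideal.mem_span_range_iff_exists_fun.1 (hb 0)
  obtain ⟨n, hn⟩ := Ideal.mem_span_range_iff_exists_fun.1 (hb 1)
  rw [Fin.sum_univ_two] at hl hn
  obtain ⟨c, hc₁, hc₀⟩ := hq.exists_eq_mul (x := u 1 * l 0 - u 0 * n 0)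
    (y := u 0 * n 1 - u 1 * l 1) (by linear_combination u 1 * hl - u 0 * hn)
  simp only [vecMul_fin_two] at hl hc₀ hc₁
  obtain ⟨r, hr⟩ := hu.dvd_of_dvd_mul (l 0 - c * Φ 1 1)
    ⟨n 0 + c * Φ 0 1, by linear_combination hc₀⟩
  obtain ⟨r', hr'⟩ := hu.dvd_of_dvd_mul (l 1 + c * Φ 1 0)
    ⟨n 1 - c * Φ 0 0, by linear_combination -hc₁⟩
  refine ⟨c, Ideal.mem_span_range_iff_exists_fun.2 ⟨![r, r'], mul_left_cancel₀ hu.ne_zero ?_⟩⟩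
  rw [Fin.sum_univ_two, vecMul_fin_two, vecMul_fin_two, det_fin_two]
  simp only [cons_val_zero, cons_val_one]
  linear_combination hl - (u 0 * Φ 0 0 + u 1 * Φ 1 0) * hr - (u 0 * Φ 0 1 + u 1 * Φ 1 1) * hr'

theorem mem_span_range_of_mul_det_mem (hu : Prime (u 0))
    (hq : IsRegularPair ((u ᵥ* Φ) 0) ((u ᵥ* Φ) 1)) {t : D}
    (ht : t * Φ.det ∈ Ideal.span (Set.range (u ᵥ* Φ))) : t ∈ Ideal.span (Set.range u) := by
  obtain ⟨l, hl⟩ := Ideal.mem_span_range_iff_exists_fun.1 ht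
  rw [Fin.sum_univ_two] at hl
  obtain ⟨c, hc₀, hc₁⟩ := hq.exists_eq_mul (x := t * Φ 1 1 - u 0 * l 0)
    (y := t * Φ 1 0 + u 0 * l 1) (by
      rw [det_fin_two] at hl
      linear_combination -u 0 * hl + t * Φ 1 1 * vecMul_fin_two u Φ 0 -
        t * Φ 1 0 * vecMul_fin_two u Φ 1)
  simp only [vecMul_fin_two] at hc₀ hc₁ hq
  have hdvd₀ : u 0 ∣ (t - c * u 1) * Φ 1 0 := ⟨c * Φ 0 0 - l 1, by linear_combination hc₀⟩
  have hdvd₁ : u 0 ∣ (t - c * u 1) * Φ 1 1 := ⟨c * Φ 0 1 + l 0, by linear_combination hc₁⟩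
  obtain ⟨a, ha⟩ : u 0 ∣ t - c * u 1 := by
    by_contra hnot
    obtain ⟨y, hy⟩ := (hu.dvd_or_dvd hdvd₀).resolve_left hnot
    obtain ⟨z, hz⟩ := (hu.dvd_or_dvd hdvd₁).resolve_left hnot
    -- both members of the pair would be divisible by the nonunit `u 0`
    have hq' : IsRegularPair (u 0 * (Φ 0 0 + u 1 * y)) (u 0 * (Φ 0 1 + u 1 * z)) := by
      convert hq using 1
      · rw [hy]; ring
      · rw [hz]; ring
    obtain ⟨e, he⟩ := hq'.dvd_of_dvd_mul (Φ 0 0 + u 1 * y) ⟨Φ 0 1 + u 1 * z, by ring⟩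
    refine hu.not_isUnit (.of_mul_eq_one e (mul_left_cancel₀ (right_ne_zero_of_mul hq'.ne_zero) ?_))
    linear_combination -he
  exact Ideal.mem_span_range_iff_exists_fun.2
    ⟨![a, c], by rw [Fin.sum_univ_two]; simp only [cons_val_zero, cons_val_one]
                 linear_combination -ha⟩

end Linkage

section GradedLinkage

attribute [local instance] MvPolynomial.gradedAlgebra

open Matrix

variable {O : Type*} [CommRing O]

theorem sub_C_coeff_zero_mem_idealOfVars {ι : Type*} (c : MvPolynomial ι O) :
    c - C (coeff 0 c) ∈ idealOfVars ι O := by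
  rw [← pow_one (idealOfVars ι O), mem_pow_idealOfVars_iff']
  intro e he
  have : e = 0 := (Finsupp.degree_eq_zero_iff e).1 (by omega)
  simp [this]

theorem isRegularPair_X_zero_X_one [IsDomain O] :
    IsRegularPair (X 0 : MvPolynomial (Fin 2) O) (X 1) :=
  ⟨X_ne_zero 0, fun _ h => (X_prime.dvd_or_dvd h).resolve_left (by simp [X_dvd_X])⟩

variable {Φ : Matrix (Fin 2) (Fin 2) (MvPolynomial (Fin 2) O)}

theorem isHomogeneous_X_vecMul (hΦ : ∀ i j, (Φ i j).IsHomogeneous 1) (j : Fin 2) :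
    ((X ᵥ* Φ) j).IsHomogeneous 2 :=
  IsHomogeneous.sum _ _ _ fun i _ => (isHomogeneous_X O i).mul (hΦ i j)

theorem isHomogeneous_det_fin_two (hΦ : ∀ i j, (Φ i j).IsHomogeneous 1) :
    Φ.det.IsHomogeneous 2 := by
  rw [det_fin_two]
  exact ((hΦ 0 0).mul (hΦ 1 1)).sub ((hΦ 0 1).mul (hΦ 1 0))

theorem homogeneousComponent_mem_span_X_vecMul (hΦ : ∀ i j, (Φ i j).IsHomogeneous 1)
    {b : MvPolynomial (Fin 2) O} (hb : b ∈ Ideal.span (Set.range (X ᵥ* Φ))) (j : ℕ) :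
    homogeneousComponent j b ∈ Ideal.span (Set.range (X ᵥ* Φ)) :=
  homogeneousComponent_mem_of_mem (Ideal.homogeneous_span _ _ (by
    rintro _ ⟨l, rfl⟩
    exact ⟨2, isHomogeneous_X_vecMul hΦ l⟩)) hb j

theorem homogeneousComponent_one_eq_zero_of_mem (hΦ : ∀ i j, (Φ i j).IsHomogeneous 1)
    {b : MvPolynomial (Fin 2) O} (hb : b ∈ Ideal.span (Set.range (X ᵥ* Φ))) :
    homogeneousComponent 1 b = 0 := by
  have hle : Ideal.span (Set.range (X ᵥ* Φ)) ≤ idealOfVars (Fin 2) O ^ 2 := by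
    rw [Ideal.span_le]
    rintro _ ⟨l, rfl⟩
    rw [SetLike.mem_coe, mem_pow_idealOfVars_iff]
    intro e he
    exact (Finsupp.degree_apply e ▸ (isHomogeneous_X_vecMul hΦ l).degree_eq_sum_deg_support he).le
  ext e
  rw [coeff_homogeneousComponent, coeff_zero]
  split_ifs with he
  · exact (mem_pow_idealOfVars_iff' 2 b).1 (hle hb) e (by omega)
  · rfl

variable [IsDomain O]

theorem exists_sub_C_mul_det_mem (hq : IsRegularPair ((X ᵥ* Φ) 0) ((X ᵥ* Φ) 1))
    {b : MvPolynomial (Fin 2) O} (hb : ∀ i, X i * b ∈ Ideal.span (Set.range (X ᵥ* Φ))) :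
    ∃ α, b - C α * Φ.det ∈ Ideal.span (Set.range (X ᵥ* Φ)) := by
  obtain ⟨c, hc⟩ := exists_sub_mul_det_mem isRegularPair_X_zero_X_one hq hb
  refine ⟨coeff 0 c, ?_⟩
  have hdet := mul_det_mem_span_range_vecMul X Φ (sub_C_coeff_zero_mem_idealOfVars c)
  convert Ideal.add_mem _ hc hdet using 1
  ring

theorem mem_of_X_mul_mem (hΦ : ∀ i j, (Φ i j).IsHomogeneous 1)
    (hq : IsRegularPair ((X ᵥ* Φ) 0) ((X ᵥ* Φ) 1)) {b : MvPolynomial (Fin 2) O} {j : ℕ}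
    (hb : b.IsHomogeneous j) (hj : j ≠ 2)
    (hXb : ∀ i, X i * b ∈ Ideal.span (Set.range (X ᵥ* Φ))) :
    b ∈ Ideal.span (Set.range (X ᵥ* Φ)) := by
  obtain ⟨α, hα⟩ := exists_sub_C_mul_det_mem hq hXb
  have h := homogeneousComponent_mem_span_X_vecMul hΦ hα j
  rwa [map_sub, homogeneousComponent_eq_self hb, homogeneousComponent_C_mul,
    homogeneousComponent_of_mem (isHomogeneous_det_fin_two hΦ), if_neg hj, mul_zero,
    sub_zero] at h

theorem eq_zero_of_isHomogeneous_one_of_X_mul_mem (hΦ : ∀ i j, (Φ i j).IsHomogeneous 1)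
    (hq : IsRegularPair ((X ᵥ* Φ) 0) ((X ᵥ* Φ) 1)) {b : MvPolynomial (Fin 2) O}
    (hb : b.IsHomogeneous 1) (hXb : ∀ i, X i * b ∈ Ideal.span (Set.range (X ᵥ* Φ))) : b = 0 := by
  rw [← homogeneousComponent_eq_self hb]
  exact homogeneousComponent_one_eq_zero_of_mem hΦ
    (mem_of_X_mul_mem hΦ hq hb (by decide) hXb)

theorem mem_of_pow_idealOfVars_mul_mem (hΦ : ∀ i j, (Φ i j).IsHomogeneous 1)
    (hq : IsRegularPair ((X ᵥ* Φ) 0) ((X ᵥ* Φ) 1)) (N : ℕ) {b : MvPolynomial (Fin 2) O} {j : ℕ}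
    (hj : 3 ≤ j) (hb : b.IsHomogeneous j)
    (hN : ∀ r ∈ idealOfVars (Fin 2) O ^ N, r * b ∈ Ideal.span (Set.range (X ᵥ* Φ))) :
    b ∈ Ideal.span (Set.range (X ᵥ* Φ)) := by
  induction N generalizing b j with
  | zero => simpa using hN 1 (by simp)
  | succ N ih =>
    refine mem_of_X_mul_mem hΦ hq hb (by omega) fun i =>
      ih (j := 1 + j) (by omega) ((isHomogeneous_X O i).mul hb) fun r hr => ?_
    rw [← mul_assoc]
    exact hN _ (pow_succ (idealOfVars (Fin 2) O) N ▸
      Ideal.mul_mem_mul hr (Ideal.subset_span ⟨i, rfl⟩))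

theorem exists_sub_C_mul_det_mem_of_pow_idealOfVars_mul_mem
    (hΦ : ∀ i j, (Φ i j).IsHomogeneous 1) (hq : IsRegularPair ((X ᵥ* Φ) 0) ((X ᵥ* Φ) 1)) {N : ℕ}
    {b : MvPolynomial (Fin 2) O} (hb : b.IsHomogeneous 2)
    (hN : ∀ r ∈ idealOfVars (Fin 2) O ^ N, r * b ∈ Ideal.span (Set.range (X ᵥ* Φ))) :
    ∃ α, b - C α * Φ.det ∈ Ideal.span (Set.range (X ᵥ* Φ)) := by
  refine exists_sub_C_mul_det_mem hq fun i =>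
    mem_of_pow_idealOfVars_mul_mem hΦ hq N (by decide) ((isHomogeneous_X O i).mul hb) fun r hr => ?_
  rw [mul_left_comm]
  exact Ideal.mul_mem_left _ _ (hN r hr)

end GradedLinkage

section LocalPoint

open Matrix

variable {O : Type*} [CommRing O] {m : ℕ}

/-- When `[a, b] = 1`, the columns of `σ` together with `a, b` form a basis, and `localPoint σ a b`
is the generic solution `x` of `x σ = 0`, parametrized by `X 0 = x · a` and `X 1 = x · b`. -/
def localPoint (σ : Matrix (Fin (m + 2)) (Fin m) O) (a b : Fin (m + 2) → O) :
    Fin (m + 2) → MvPolynomial (Fin 2) O :=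
  fun t => C (bracket σ (Pi.single t 1) b) * X 0 + C (bracket σ a (Pi.single t 1)) * X 1

/-- The matrix of linear forms expressing the two quadrics `x · U x` and `x · V x` at the local
point `x` in terms of `X 0` and `X 1`. -/
def localMatrix (σ : Matrix (Fin (m + 2)) (Fin m) O) (U V : Matrix (Fin (m + 2)) (Fin (m + 2)) O)
    (a b : Fin (m + 2) → O) : Matrix (Fin 2) (Fin 2) (MvPolynomial (Fin 2) O) :=
  !![bracket (σ.map C) (U.map C *ᵥ localPoint σ a b) (C ∘ b),
      bracket (σ.map C) (V.map C *ᵥ localPoint σ a b) (C ∘ b);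
    bracket (σ.map C) (C ∘ a) (U.map C *ᵥ localPoint σ a b),
      bracket (σ.map C) (C ∘ a) (V.map C *ᵥ localPoint σ a b)]

theorem isHomogeneous_dotProduct_C {ι κ : Type*} [Fintype κ] {w : κ → MvPolynomial ι O} {n : ℕ}
    (hw : ∀ t, (w t).IsHomogeneous n) (v : κ → O) : (w ⬝ᵥ (C ∘ v)).IsHomogeneous n :=
  IsHomogeneous.sum _ _ _ fun t _ => (hw t).mul (isHomogeneous_C ι (v t))

section

variable (σ : Matrix (Fin (m + 2)) (Fin m) O) (U V : Matrix (Fin (m + 2)) (Fin (m + 2)) O)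
  (a b : Fin (m + 2) → O)

theorem isHomogeneous_localPoint (t : Fin (m + 2)) : (localPoint σ a b t).IsHomogeneous 1 :=
  (isHomogeneous_C_mul_X _ _).add (isHomogeneous_C_mul_X _ _)

theorem isHomogeneous_bracket_C {ι : Type*} {w : Fin (m + 2) → MvPolynomial ι O} {n : ℕ}
    (hw : ∀ t, (w t).IsHomogeneous n) :
    (bracket (σ.map (C : O →+* MvPolynomial ι O)) (C ∘ a) w).IsHomogeneous n := by
  rw [← dotProduct_bracketVec, bracketVec_map]
  exact isHomogeneous_dotProduct_C hw _

theorem isHomogeneous_localMatrix (i j : Fin 2) : (localMatrix σ U V a b i j).IsHomogeneous 1 := by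
  have hmulVec (M : Matrix (Fin (m + 2)) (Fin (m + 2)) O) (t : Fin (m + 2)) :
      ((M.map C *ᵥ localPoint σ a b) t).IsHomogeneous 1 := by
    rw [mulVec, dotProduct_comm]
    exact isHomogeneous_dotProduct_C (isHomogeneous_localPoint σ a b) (M t)
  have hright (M : Matrix (Fin (m + 2)) (Fin (m + 2)) O) :
      (bracket (σ.map C) (C ∘ a) (M.map C *ᵥ localPoint σ a b)).IsHomogeneous 1 :=
    isHomogeneous_bracket_C σ a (hmulVec M)
  have hleft (M : Matrix (Fin (m + 2)) (Fin (m + 2)) O) :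
      (bracket (σ.map C) (M.map C *ᵥ localPoint σ a b) (C ∘ b)).IsHomogeneous 1 := by
    rw [bracket_swap]
    exact (isHomogeneous_bracket_C σ b (hmulVec M)).neg
  fin_cases i <;> fin_cases j <;> first | exact hleft _ | exact hright _

theorem localPoint_dotProduct_C (w : Fin (m + 2) → O) :
    localPoint σ a b ⬝ᵥ (C ∘ w) = C (bracket σ w b) * X 0 + C (bracket σ a w) * X 1 := by
  conv_rhs => rw [pi_eq_sum_univ' w]
  simp only [dotProduct, localPoint, Function.comp_apply, map_sum, map_smul,
    LinearMap.sum_apply, LinearMap.smul_apply, smul_eq_mul, map_mul, Finset.sum_mul,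
    ← Finset.sum_add_distrib]
  exact Finset.sum_congr rfl fun t _ => by ring

theorem localPoint_vecMul : localPoint σ a b ᵥ* σ.map C = 0 := by
  ext1 l
  change localPoint σ a b ⬝ᵥ (C ∘ σ.col l) = 0
  rw [localPoint_dotProduct_C, bracket_col, bracket_swap, bracket_col]
  simp

theorem localPoint_dotProduct_C_mulVec (p : Fin m → O) :
    localPoint σ a b ⬝ᵥ (C ∘ (σ *ᵥ p)) = 0 := by
  have hC : (C : O →+* MvPolynomial (Fin 2) O) ∘ (σ *ᵥ p) = σ.map C *ᵥ (C ∘ p) :=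
    funext fun t => (C : O →+* MvPolynomial (Fin 2) O).map_mulVec σ p t
  rw [hC, dotProduct_mulVec, localPoint_vecMul, zero_dotProduct]

/-- The ideal of the two quadrics at the local point. -/
def localIdeal : Ideal (MvPolynomial (Fin 2) O) :=
  Ideal.span {localPoint σ a b ⬝ᵥ U.map C *ᵥ localPoint σ a b,
    localPoint σ a b ⬝ᵥ V.map C *ᵥ localPoint σ a b}

theorem localPoint_dotProduct_mul_sub_mem_localIdeal (τ s : Fin (m + 2) → O) :
    (localPoint σ a b ⬝ᵥ (C ∘ s)) * (localPoint σ a b ⬝ᵥ (C ∘ generatorMap σ U V τ)) -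
      C (bracket σ τ s) * bracket (σ.map C) (U.map C *ᵥ localPoint σ a b)
        (V.map C *ᵥ localPoint σ a b) ∈ localIdeal σ U V a b := by
  rw [← generatorMap_map, ← bracket_map]
  exact dotProduct_mul_dotProduct_generatorMap_sub_mem _ _ _ _
    (fun l => by rw [localPoint_vecMul]; exact zero_mem _) (Ideal.subset_span (by simp))
    (Ideal.subset_span (by simp)) _ _

end

variable {σ : Matrix (Fin (m + 2)) (Fin m) O} {U V : Matrix (Fin (m + 2)) (Fin (m + 2)) O}
  {a b : Fin (m + 2) → O} (hab : bracket σ a b = 1)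
include hab

theorem localPoint_dotProduct_left : localPoint σ a b ⬝ᵥ (C ∘ a) = X 0 := by
  simp [localPoint_dotProduct_C, hab, bracket_self]

theorem localPoint_dotProduct_right : localPoint σ a b ⬝ᵥ (C ∘ b) = X 1 := by
  simp [localPoint_dotProduct_C, hab, bracket_self]

theorem bracket_C_eq_one {ι : Type*} :
    bracket (σ.map (C : O →+* MvPolynomial ι O)) (C ∘ a) (C ∘ b) = 1 := by
  rw [bracket_map, hab, map_one]

theorem localPoint_dotProduct (w : Fin (m + 2) → MvPolynomial (Fin 2) O) :
    localPoint σ a b ⬝ᵥ w =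
      X 0 * bracket (σ.map C) w (C ∘ b) + X 1 * bracket (σ.map C) (C ∘ a) w := by
  have h := bracket_mul_dotProduct (σ.map C) (localPoint_vecMul σ a b) (C ∘ a) (C ∘ b) w
  rw [bracket_C_eq_one hab, localPoint_dotProduct_left hab, localPoint_dotProduct_right hab] at h
  linear_combination h

theorem X_vecMul_localMatrix : X ᵥ* localMatrix σ U V a b =
    ![localPoint σ a b ⬝ᵥ U.map C *ᵥ localPoint σ a b,
      localPoint σ a b ⬝ᵥ V.map C *ᵥ localPoint σ a b] := by
  rw [localPoint_dotProduct hab, localPoint_dotProduct hab]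
  ext1 j
  rw [vecMul_fin_two]
  fin_cases j <;> rfl

theorem localIdeal_eq : localIdeal σ U V a b =
    Ideal.span (Set.range (X ᵥ* localMatrix σ U V a b)) := by
  rw [X_vecMul_localMatrix hab, range_cons_cons_empty, localIdeal]

theorem det_localMatrix : (localMatrix σ U V a b).det =
    bracket (σ.map C) (U.map C *ᵥ localPoint σ a b) (V.map C *ᵥ localPoint σ a b) := by
  have h := bracket_mul_bracket (σ.map C) (C ∘ a) (C ∘ b) (U.map C *ᵥ localPoint σ a b)
    (V.map C *ᵥ localPoint σ a b)
  rw [bracket_C_eq_one hab, bracket_swap _ _ (C ∘ a)] at h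
  rw [localMatrix, det_fin_two_of]
  linear_combination -h

theorem exists_eq_mulVec_of_localPoint_dotProduct_eq_zero {w : Fin (m + 2) → O}
    (hw : localPoint σ a b ⬝ᵥ (C ∘ w) = 0) : ∃ p, w = σ *ᵥ p := by
  rw [localPoint_dotProduct_C] at hw
  have hwb : bracket σ w b = 0 := by
    simpa using congrArg (eval (Pi.single 0 1 : Fin 2 → O)) hw
  have haw : bracket σ a w = 0 := by
    simpa using congrArg (eval (Pi.single 1 1 : Fin 2 → O)) hw
  obtain ⟨p, hp⟩ := exists_bracket_smul_eq σ a b w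
  exact ⟨p, by simpa [hab, hwb, haw] using hp⟩

variable [IsDomain O] (hq : IsRegularPair (localPoint σ a b ⬝ᵥ U.map C *ᵥ localPoint σ a b)
  (localPoint σ a b ⬝ᵥ V.map C *ᵥ localPoint σ a b))
include hq

omit [IsDomain O] in
theorem isRegularPair_X_vecMul_localMatrix :
    IsRegularPair ((X ᵥ* localMatrix σ U V a b) 0) ((X ᵥ* localMatrix σ U V a b) 1) := by
  rwa [X_vecMul_localMatrix hab]

theorem bracket_eq_zero_of_localPoint_dotProduct_generatorMap_mem {τ : Fin (m + 2) → O}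
    (hτ : localPoint σ a b ⬝ᵥ (C ∘ generatorMap σ U V τ) ∈ localIdeal σ U V a b)
    (s : Fin (m + 2) → O) : bracket σ τ s = 0 := by
  have hdet : C (bracket σ τ s) * (localMatrix σ U V a b).det ∈ localIdeal σ U V a b := by
    rw [det_localMatrix hab]
    exact (Submodule.sub_mem_iff_right _ (Ideal.mul_mem_left _ _ hτ)).1
      (localPoint_dotProduct_mul_sub_mem_localIdeal σ U V a b τ s)
  rw [localIdeal_eq hab] at hdet
  have hC : C (bracket σ τ s) ∈ idealOfVars (Fin 2) O ^ 1 := by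
    rw [pow_one]
    exact mem_span_range_of_mul_det_mem X_prime (isRegularPair_X_vecMul_localMatrix hab hq) hdet
  simpa using (C_mem_pow_idealOfVars_iff 1 _).1 hC

theorem exists_eq_generatorMap_add_of_pow_idealOfVars_mul_mem {w : Fin (m + 2) → O} {N : ℕ}
    (hw : ∀ r ∈ idealOfVars (Fin 2) O ^ N,
      r * (localPoint σ a b ⬝ᵥ (C ∘ w)) ∈ localIdeal σ U V a b) :
    ∃ τ p, w = generatorMap σ U V τ + σ *ᵥ p := by
  have hΦ := isHomogeneous_localMatrix σ U V a b
  have hreg := isRegularPair_X_vecMul_localMatrix hab hq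
  have hlinear (v : Fin (m + 2) → O) : (localPoint σ a b ⬝ᵥ (C ∘ v)).IsHomogeneous 1 :=
    isHomogeneous_dotProduct_C (isHomogeneous_localPoint σ a b) v
  rw [localIdeal_eq hab] at hw
  choose α hα using fun l : Fin 2 => exists_sub_C_mul_det_mem_of_pow_idealOfVars_mul_mem hΦ hreg
    ((isHomogeneous_X O l).mul (hlinear w)) fun r hr =>
      mul_left_comm r (X l) (localPoint σ a b ⬝ᵥ (C ∘ w)) ▸ Ideal.mul_mem_left _ _ (hw r hr)
  set τ := α 1 • a - α 0 • b
  have hτa : bracket σ τ a = α 0 := by simp [τ, bracket_self, bracket_swap σ b a, hab]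
  have hτb : bracket σ τ b = α 1 := by simp [τ, bracket_self, hab]
  have hX (l : Fin 2) : X l * (localPoint σ a b ⬝ᵥ (C ∘ generatorMap σ U V τ)) -
      C (α l) * (localMatrix σ U V a b).det ∈
        Ideal.span (Set.range (X ᵥ* localMatrix σ U V a b)) := by
    rw [← localIdeal_eq hab, det_localMatrix hab]
    match l with
    | 0 => simpa only [localPoint_dotProduct_left hab, hτa] using
        localPoint_dotProduct_mul_sub_mem_localIdeal σ U V a b τ a
    | 1 => simpa only [localPoint_dotProduct_right hab, hτb] using
        localPoint_dotProduct_mul_sub_mem_localIdeal σ U V a b τ b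
  have hsub : localPoint σ a b ⬝ᵥ (C ∘ (w - generatorMap σ U V τ)) =
      localPoint σ a b ⬝ᵥ (C ∘ w) - localPoint σ a b ⬝ᵥ (C ∘ generatorMap σ U V τ) := by
    rw [← dotProduct_sub]
    congr 1
    ext1 t
    simp
  have hzero : localPoint σ a b ⬝ᵥ (C ∘ (w - generatorMap σ U V τ)) = 0 := by
    refine eq_zero_of_isHomogeneous_one_of_X_mul_mem hΦ hreg (hlinear _) fun l => ?_
    rw [hsub]
    convert Ideal.sub_mem _ (hα l) (hX l) using 1
    ring
  obtain ⟨p, hp⟩ := exists_eq_mulVec_of_localPoint_dotProduct_eq_zero hab hzero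
  exact ⟨τ, p, eq_add_of_sub_eq' hp⟩

end LocalPoint

section Gluing

theorem height_le_height_of_le_radical {A : Type*} [CommRing A] {I J : Ideal A}
    (h : I ≤ J.radical) :
    I.height ≤ J.height := by
  have hradical : J.radical.height = J.height := by
    rw [Ideal.height_eq_inf_minimalPrimes, Ideal.radical_minimalPrimes,
      ← Ideal.height_eq_inf_minimalPrimes]
  exact (Ideal.height_mono h).trans hradical.le

variable {A : Type*} [CommRing A] [IsDomain A]

theorem IsRegularPair.exists_eq_smul {f g : A} (hfg : IsRegularPair f g) {κ : Type*} {x y : κ → A}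
    (hxy : f • x = g • y) : ∃ c : κ → A, y = f • c ∧ x = g • c := by
  have hxy' (l : κ) : x l * f = y l * g := by
    rw [mul_comm, mul_comm (y l)]
    exact congrFun hxy l
  choose c hc using fun l => hfg.exists_eq_mul (hxy' l)
  refine ⟨c, funext fun l => ?_, funext fun l => ?_⟩
  · simp [(hc l).1, mul_comm]
  · simp [(hc l).2, mul_comm]

variable [UniqueFactorizationMonoid A] [IsNoetherianRing A] {κ : Type*} {M N : Type*}
  [AddCommGroup M] [Module A M] [AddCommGroup N] [Module A N] [Module.IsTorsionFree A N]

theorem mem_range_of_two_le_height_colon [Module.IsTorsionFree A M] {S : (κ → A) →ₗ[A] M}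
    (hS : Function.Injective S) {w : M} (hw : 2 ≤ ((LinearMap.range S).colon {w}).height) :
    w ∈ LinearMap.range S := by
  obtain ⟨f, hf, g, hg, hfg⟩ := exists_isRegularPair_of_two_le_height _ hw
  obtain ⟨p, hp⟩ := Submodule.mem_colon_singleton.1 hf
  obtain ⟨q, hq⟩ := Submodule.mem_colon_singleton.1 hg
  have hpq : f • q = g • p := hS (by rw [map_smul, map_smul, hp, hq, smul_comm])
  obtain ⟨c, rfl, -⟩ := hfg.exists_eq_smul hpq
  exact ⟨c, smul_right_injective M hfg.ne_zero (by simpa using hp)⟩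

/-- Two sections of `G` over `f` and `g` differ on the overlap by some `S p`; unmixedness of
`(f, g)` splits `p` as `f q + g r`, which corrects the sections so that they glue. -/
theorem mem_range_of_three_le_height_colon (hA : IsPairUnmixed A) {ι : Type*}
    {S : (κ → A) →ₗ[A] (ι → A)} {G : (ι → A) →ₗ[A] N} (hS : Function.Injective S)
    (hSG : Function.Exact S G) {c : N} (hc : 3 ≤ ((LinearMap.range G).colon {c}).height) :
    c ∈ LinearMap.range G := by
  obtain ⟨f, hf, g, hg, hfg⟩ := exists_isRegularPair_of_two_le_height _ (le_trans (by decide) hc)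
  have overlap {r s : A} {τ τ' : ι → A} (hτ : G τ = r • c) (hτ' : G τ' = s • c) :
      ∃ p, S p = r • τ' - s • τ :=
    (hSG _).1 (by rw [map_sub, map_smul, map_smul, hτ, hτ', smul_comm, sub_self])
  obtain ⟨τf, hτf⟩ := Submodule.mem_colon_singleton.1 hf
  obtain ⟨τg, hτg⟩ := Submodule.mem_colon_singleton.1 hg
  obtain ⟨p, hp⟩ := overlap hτf hτg
  have hmem (l : κ) : p l ∈ Ideal.span {f, g} := by
    refine hA.mem_span_of_three_le_height hfg hc fun h hh => ?_
    obtain ⟨τh, hτh⟩ := Submodule.mem_colon_singleton.1 hh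
    obtain ⟨p', hp'⟩ := overlap hτf hτh
    obtain ⟨p'', hp''⟩ := overlap hτg hτh
    have hcocycle : h • p = g • p' - f • p'' := hS (by
      rw [map_sub, map_smul, map_smul, map_smul, hp, hp', hp'']
      module)
    refine Ideal.mem_span_pair.2 ⟨-p'' l, p' l, ?_⟩
    have := congrFun hcocycle l
    simp only [Pi.smul_apply, Pi.sub_apply, smul_eq_mul] at this
    linear_combination -this
  simp only [Ideal.mem_span_pair] at hmem
  choose q r hqr using hmem
  have hpqr : p = f • q + g • r := funext fun l => by simp [← hqr l, mul_comm]
  have hglue : f • (τg - S q) = g • (τf + S r) := by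
    have : f • τg - g • τf = f • S q + g • S r := by rw [← hp, hpqr, map_add, map_smul, map_smul]
    rw [smul_sub, smul_add, sub_eq_iff_eq_add, add_assoc, add_comm (g • S r), ← this]
    abel
  obtain ⟨τ, hτ, -⟩ := hfg.exists_eq_smul hglue
  refine ⟨τ, smul_right_injective N hfg.ne_zero ?_⟩
  simpa [hτf, hSG.apply_apply_eq_zero] using (congrArg G hτ).symm

end Gluing

section BracketIdeal

open Matrix

variable {A : Type*} [CommRing A] {m : ℕ}

/-- The ideal generated by the brackets `[e_i, e_j]`, that is, up to sign, by the maximal minors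
of `σ`. -/
def bracketIdeal (σ : Matrix (Fin (m + 2)) (Fin m) A) : Ideal A :=
  Ideal.span (Set.range fun ij : Fin (m + 2) × Fin (m + 2) =>
    bracket σ (Pi.single ij.1 1) (Pi.single ij.2 1))

theorem bracketIdeal_le_iff {σ : Matrix (Fin (m + 2)) (Fin m) A} {I : Ideal A} :
    bracketIdeal σ ≤ I ↔ ∀ i j, bracket σ (Pi.single i 1) (Pi.single j 1) ∈ I := by
  rw [bracketIdeal, Ideal.span_le, Set.range_subset_iff, Prod.forall]
  rfl

theorem bracket_single_mem_bracketIdeal (σ : Matrix (Fin (m + 2)) (Fin m) A) (i j : Fin (m + 2)) :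
    bracket σ (Pi.single i 1) (Pi.single j 1) ∈ bracketIdeal σ :=
  bracketIdeal_le_iff.1 le_rfl i j

theorem bracket_single_perm (σ : Matrix (Fin (m + 2)) (Fin m) A) (e : Equiv.Perm (Fin (m + 2))) :
    bracket σ (Pi.single (e 0) 1) (Pi.single (e 1) 1) =
      Equiv.Perm.sign e * (σ.submatrix (fun l => e l.succ.succ) id).det := by
  set N := of (vecCons (Pi.single (e 0) 1) (vecCons (Pi.single (e 1) 1) σ.col))
  have hsingle (s : Fin (m + 2)) : (Pi.single (e s) 1 : Fin (m + 2) → A) ∘ e = Pi.single s 1 := by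
    simp [Pi.single_comp_equiv]
  have hperm : (N.submatrix id e).det = (σ.submatrix (fun l => e l.succ.succ) id).det := by
    have hzero (l : Fin (m + 2)) : N 0 (e l) = (Pi.single 0 1 : Fin (m + 2) → A) l :=
      congrFun (hsingle 0) l
    have hone (l : Fin (m + 2)) : N 1 (e l) = (Pi.single 1 1 : Fin (m + 2) → A) l :=
      congrFun (hsingle 1) l
    rw [det_succ_row_zero, Finset.sum_eq_single 0 (by intro l _ hl; simp [hzero, hl]) (by simp),
      det_succ_row_zero, Finset.sum_eq_single 0 _ (by simp), ← det_transpose (σ.submatrix _ _)]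
    · simp [hzero, hone]
      rfl
    · intro l _ hl
      have hl' : l.succ ≠ 1 := (Fin.succ_injective _).ne hl
      simp [hone, hl']
  have hdet := det_permute' e N
  rw [hperm] at hdet
  rw [hdet, ← mul_assoc, ← Int.cast_mul]
  simp [bracket_apply, N]

theorem det_submatrix_mem_bracketIdeal (σ : Matrix (Fin (m + 2)) (Fin m) A)
    (f : Fin m → Fin (m + 2)) (g : Fin m → Fin m) : (σ.submatrix f g).det ∈ bracketIdeal σ := by
  by_cases hf : Function.Injective f
  · by_cases hg : Function.Injective g
    · obtain ⟨e, he⟩ := Equiv.Perm.exists_extending_pair (fun l : Fin m => l.succ.succ) f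
        (by intro a b; simp) hf
      let e' := Equiv.ofBijective g (Finite.injective_iff_bijective.1 hg)
      have hperm : (σ.submatrix f g).det =
          Equiv.Perm.sign e' * (σ.submatrix (fun l => e l.succ.succ) id).det := by
        rw [← det_permute' e', funext he]
        rfl
      have hbracket := bracket_single_mem_bracketIdeal σ (e 0) (e 1)
      rw [bracket_single_perm] at hbracket
      have hunit : IsUnit ((Equiv.Perm.sign e : ℤ) : A) :=
        (Equiv.Perm.sign e).isUnit.map (Int.castRingHom A)
      rw [hperm]
      exact Ideal.mul_mem_left _ _ ((Ideal.unit_mul_mem_iff_mem _ hunit).1 hbracket)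
    · obtain ⟨a, b, hab, hne⟩ := Function.not_injective_iff.1 hg
      rw [det_zero_of_column_eq hne fun l => by simp [hab]]
      exact Ideal.zero_mem _
  · obtain ⟨a, b, hab, hne⟩ := Function.not_injective_iff.1 hf
    rw [det_zero_of_row_eq hne (by ext l; simp [hab])]
    exact Ideal.zero_mem _

theorem exists_bracket_single_ne_zero {σ : Matrix (Fin (m + 2)) (Fin m) A} [IsDomain A]
    (hσ : 1 ≤ (bracketIdeal σ).height) :
    ∃ i j, bracket σ (Pi.single i 1) (Pi.single j 1) ≠ 0 := by
  by_contra! h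
  have hbot : bracketIdeal σ = ⊥ := le_bot_iff.1 (bracketIdeal_le_iff.2 fun i j => by simp [h i j])
  simp [hbot] at hσ

theorem mulVec_injective_of_bracket_ne_zero [IsDomain A] {σ : Matrix (Fin (m + 2)) (Fin m) A}
    {w w' : Fin (m + 2) → A} (h : bracket σ w w' ≠ 0) : Function.Injective σ.mulVecLin := by
  rw [← LinearMap.ker_eq_bot, LinearMap.ker_eq_bot']
  intro p hp
  set M := of (vecCons w (vecCons w' σ.col))
  have hdet : Mᵀ.det ≠ 0 := by rwa [det_transpose]
  have hM : Mᵀ *ᵥ vecCons 0 (vecCons 0 p) = σ *ᵥ p := by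
    simp only [mulVec_eq_sum, Fin.sum_univ_succ, op_smul_eq_smul]
    simp
    rfl
  have hzero := eq_zero_of_mulVec_eq_zero hdet (hM.trans hp)
  exact funext fun l => congrFun hzero l.succ.succ

theorem exists_eq_mulVec_of_smul_eq [IsDomain A] [UniqueFactorizationMonoid A] [IsNoetherianRing A]
    {σ : Matrix (Fin (m + 2)) (Fin m) A} (hσ : 2 ≤ (bracketIdeal σ).height) {f : A} (hf : f ≠ 0)
    {w : Fin (m + 2) → A} {p : Fin m → A} (hp : f • w = σ *ᵥ p) : ∃ q, w = σ *ᵥ q := by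
  obtain ⟨i, j, hij⟩ := exists_bracket_single_ne_zero (le_trans (by decide) hσ)
  have hw (s : Fin (m + 2) → A) : bracket σ w s = 0 := by
    have := congrArg (bracket σ · s) hp
    simpa [bracket_mulVec_left, hf] using this
  have hcolon : bracketIdeal σ ≤ (LinearMap.range σ.mulVecLin).colon {w} := by
    refine bracketIdeal_le_iff.2 fun i j => Submodule.mem_colon_singleton.2 ?_
    obtain ⟨q, hq⟩ := exists_bracket_smul_eq σ (Pi.single i 1) (Pi.single j 1) w
    rw [bracket_swap σ (Pi.single i 1) w, hw, hw] at hq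
    exact ⟨q, by simpa using hq.symm⟩
  obtain ⟨q, hq⟩ := mem_range_of_two_le_height_colon (mulVec_injective_of_bracket_ne_zero hij)
    (hσ.trans (Ideal.height_mono hcolon))
  exact ⟨q, hq.symm⟩

theorem isTorsionFree_quotient_range_mulVecLin [IsDomain A] [UniqueFactorizationMonoid A]
    [IsNoetherianRing A] {σ : Matrix (Fin (m + 2)) (Fin m) A} (hσ : 2 ≤ (bracketIdeal σ).height) :
    Module.IsTorsionFree A ((Fin (m + 2) → A) ⧸ LinearMap.range σ.mulVecLin) := by
  refine .of_smul_eq_zero fun f w hfw => or_iff_not_imp_left.2 fun hf => ?_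
  obtain ⟨w, rfl⟩ := Submodule.mkQ_surjective _ w
  rw [← map_smul, Submodule.mkQ_apply, Submodule.Quotient.mk_eq_zero] at hfw
  obtain ⟨p, hp⟩ := hfw
  obtain ⟨q, hq⟩ := exists_eq_mulVec_of_smul_eq hσ hf hp.symm
  exact (Submodule.Quotient.mk_eq_zero _).2 ⟨q, hq.symm⟩

theorem exists_eq_add_mulVec_of_pow_smul [IsDomain A] [UniqueFactorizationMonoid A]
    [IsNoetherianRing A] (hA : IsPairUnmixed A) {σ : Matrix (Fin (m + 2)) (Fin m) A}
    (hσ : 3 ≤ (bracketIdeal σ).height) (G : (Fin (m + 2) → A) →ₗ[A] (Fin (m + 2) → A))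
    (hG : ∀ p, G (σ *ᵥ p) = 0) (hker : ∀ τ p, G τ = σ *ᵥ p → ∃ q, τ = σ *ᵥ q)
    (a : Fin (m + 2) → A)
    (hloc : ∀ i j, bracket σ (Pi.single i 1) (Pi.single j 1) ≠ 0 → ∃ (N : ℕ) (τ : _) (p : _),
      bracket σ (Pi.single i 1) (Pi.single j 1) ^ N • a = G τ + σ *ᵥ p) :
    ∃ τ p, a = G τ + σ *ᵥ p := by
  set S := σ.mulVecLin
  set Q := LinearMap.range S
  have mem_Q (w : Fin (m + 2) → A) : w ∈ Q ↔ ∃ p, w = σ *ᵥ p :=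
    exists_congr fun p => eq_comm
  obtain ⟨i, j, hij⟩ := exists_bracket_single_ne_zero (le_trans (by decide) hσ)
  have := isTorsionFree_quotient_range_mulVecLin (le_trans (by decide) hσ)
  have hexact : Function.Exact S (Q.mkQ ∘ₗ G) := fun τ => by
    rw [LinearMap.comp_apply, Submodule.mkQ_apply, Submodule.Quotient.mk_eq_zero, mem_Q]
    constructor
    · rintro ⟨p, hp⟩
      exact (hker τ p hp).imp fun _ => Eq.symm
    · rintro ⟨p, rfl⟩
      exact ⟨0, by simpa [S] using hG p⟩
  have mem_range (r : A) : r • Q.mkQ a ∈ LinearMap.range (Q.mkQ ∘ₗ G) ↔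
      ∃ τ p, r • a = G τ + σ *ᵥ p := by
    rw [← map_smul, LinearMap.mem_range]
    refine exists_congr fun τ => ?_
    rw [LinearMap.comp_apply, eq_comm, Submodule.mkQ_apply, Submodule.mkQ_apply,
      Submodule.Quotient.eq, mem_Q]
    simp only [sub_eq_iff_eq_add']
  have hcolon : bracketIdeal σ ≤ ((LinearMap.range (Q.mkQ ∘ₗ G)).colon {Q.mkQ a}).radical := by
    refine bracketIdeal_le_iff.2 fun i j => ?_
    by_cases hzero : bracket σ (Pi.single i 1) (Pi.single j 1) = 0
    · rw [hzero]
      exact Ideal.zero_mem _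
    · obtain ⟨N, hN⟩ := hloc i j hzero
      exact ⟨N, Submodule.mem_colon_singleton.2 ((mem_range _).2 hN)⟩
  have := mem_range_of_three_le_height_colon hA (mulVec_injective_of_bracket_ne_zero hij) hexact
    (hσ.trans (height_le_height_of_le_radical hcolon))
  simpa using (mem_range 1).1 (by simpa using this)

end BracketIdeal

section SymIdeal

open Matrix

variable {A O : Type*} [CommRing A] [CommRing O] {m : ℕ}

/-- The ideal presenting the symmetric algebra over `A[x]`: it is generated by the linear forms
`x σ` and the quadrics `x · U x` and `x · V x`. -/
def symIdeal (σ : Matrix (Fin (m + 2)) (Fin m) A) (U V : Matrix (Fin (m + 2)) (Fin (m + 2)) A) :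
    Ideal (MvPolynomial (Fin (m + 2)) A) :=
  Ideal.span (Set.range (X ᵥ* σ.map C) ∪ {X ⬝ᵥ U.map C *ᵥ X, X ⬝ᵥ V.map C *ᵥ X})

theorem X_vecMul_mem_symIdeal (σ : Matrix (Fin (m + 2)) (Fin m) A)
    (U V : Matrix (Fin (m + 2)) (Fin (m + 2)) A) (l : Fin m) :
    (X ᵥ* σ.map C) l ∈ symIdeal σ U V :=
  Ideal.subset_span (Or.inl ⟨l, rfl⟩)

theorem X_dotProduct_mulVec_mem_symIdeal_left (σ : Matrix (Fin (m + 2)) (Fin m) A)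
    (U V : Matrix (Fin (m + 2)) (Fin (m + 2)) A) : X ⬝ᵥ U.map C *ᵥ X ∈ symIdeal σ U V :=
  Ideal.subset_span (Or.inr (Or.inl rfl))

theorem X_dotProduct_mulVec_mem_symIdeal_right (σ : Matrix (Fin (m + 2)) (Fin m) A)
    (U V : Matrix (Fin (m + 2)) (Fin (m + 2)) A) : X ⬝ᵥ V.map C *ᵥ X ∈ symIdeal σ U V :=
  Ideal.subset_span (Or.inr (Or.inr rfl))

theorem map_symIdeal_le_iff {σ : Matrix (Fin (m + 2)) (Fin m) A}
    {U V : Matrix (Fin (m + 2)) (Fin (m + 2)) A} (f : MvPolynomial (Fin (m + 2)) A →+* O)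
    {J : Ideal O} : (symIdeal σ U V).map f ≤ J ↔
      (∀ l, ((f ∘ X) ᵥ* σ.map (f.comp C)) l ∈ J) ∧
        (f ∘ X) ⬝ᵥ U.map (f.comp C) *ᵥ (f ∘ X) ∈ J ∧
        (f ∘ X) ⬝ᵥ V.map (f.comp C) *ᵥ (f ∘ X) ∈ J := by
  have hlinear (l : Fin m) :
      f ((X ᵥ* σ.map C) l) = ((f ∘ X) ᵥ* σ.map (f.comp C)) l := by
    simp [vecMul, dotProduct]
  have hquadric (M : Matrix (Fin (m + 2)) (Fin (m + 2)) A) :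
      f (X ⬝ᵥ M.map C *ᵥ X) = (f ∘ X) ⬝ᵥ M.map (f.comp C) *ᵥ (f ∘ X) := by
    simp [mulVec, dotProduct]
  rw [Ideal.map_le_iff_le_comap, symIdeal, Ideal.span_le, Set.union_subset_iff,
    Set.range_subset_iff, Set.pair_subset_iff]
  simp only [SetLike.mem_coe, Ideal.mem_comap, hlinear, hquadric]

theorem map_symIdeal_map (σ : Matrix (Fin (m + 2)) (Fin m) A)
    (U V : Matrix (Fin (m + 2)) (Fin (m + 2)) A) (φ : A →+* O) :
    (symIdeal σ U V).map (MvPolynomial.map φ) = symIdeal (σ.map φ) (U.map φ) (V.map φ) := by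
  have hC : (MvPolynomial.map φ : MvPolynomial (Fin (m + 2)) A →+* _).comp C = C.comp φ :=
    RingHom.ext fun a => map_C φ a
  have hX : MvPolynomial.map φ ∘ X = (X : Fin (m + 2) → MvPolynomial (Fin (m + 2)) O) :=
    funext fun t => map_X φ t
  refine le_antisymm ?_ (Ideal.span_le.2 ?_)
  · rw [map_symIdeal_le_iff, hC, hX]
    simp only [RingHom.coe_comp, ← map_map]
    exact ⟨X_vecMul_mem_symIdeal _ _ _, X_dotProduct_mulVec_mem_symIdeal_left _ _ _,
      X_dotProduct_mulVec_mem_symIdeal_right _ _ _⟩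
  · have h := (map_symIdeal_le_iff (MvPolynomial.map φ)).1 (le_refl ((symIdeal σ U V).map _))
    rw [hC, hX] at h
    rintro _ (⟨l, rfl⟩ | rfl | rfl)
    exacts [h.1 l, h.2.1, h.2.2]

end SymIdeal

theorem mul_mem_map_of_mem_pow_map {R S : Type*} [CommRing R] [CommRing S] (f : R →+* S)
    {I J : Ideal R} {z : R} {N : ℕ} (hz : ∀ r ∈ I ^ N, r * z ∈ J) :
    ∀ r ∈ I.map f ^ N, r * f z ∈ J.map f := by
  have hle : I ^ N * Ideal.span {z} ≤ J := by
    rw [Ideal.mul_le]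
    intro r hr y hy
    obtain ⟨c, rfl⟩ := Ideal.mem_span_singleton'.1 hy
    rw [mul_left_comm]
    exact Ideal.mul_mem_left _ c (hz r hr)
  intro r hr
  refine Ideal.map_mono hle ?_
  rw [Ideal.map_mul, Ideal.map_pow, Ideal.map_span, Set.image_singleton]
  exact Ideal.mul_mem_mul hr (Ideal.mem_span_singleton_self _)

section LocalEvaluation

open Matrix

variable {O : Type*} [CommRing O] {m : ℕ} (σ : Matrix (Fin (m + 2)) (Fin m) O)
  (U V : Matrix (Fin (m + 2)) (Fin (m + 2)) O) (a b : Fin (m + 2) → O)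

/-- Evaluation at the local point; it identifies the symmetric algebra of the cokernel of `σ` with
a polynomial ring in two variables. -/
def evalLocalPoint : MvPolynomial (Fin (m + 2)) O →ₐ[O] MvPolynomial (Fin 2) O :=
  aeval (localPoint σ a b)

theorem evalLocalPoint_X_dotProduct_C (w : Fin (m + 2) → O) :
    evalLocalPoint σ a b (X ⬝ᵥ (C ∘ w)) = localPoint σ a b ⬝ᵥ (C ∘ w) := by
  simp [evalLocalPoint, dotProduct, algHom_C]

theorem evalLocalPoint_X_vecMul (l : Fin m) :
    evalLocalPoint σ a b ((X ᵥ* σ.map C) l) = 0 :=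
  (evalLocalPoint_X_dotProduct_C σ a b (σ.col l)).trans
    (congrFun (localPoint_vecMul σ a b) l)

theorem map_symIdeal_evalLocalPoint_le :
    (symIdeal σ U V).map (evalLocalPoint σ a b).toRingHom ≤ localIdeal σ U V a b := by
  have hC : (evalLocalPoint σ a b).toRingHom.comp C = C :=
    (evalLocalPoint σ a b).comp_algebraMap
  have hX : (evalLocalPoint σ a b).toRingHom ∘ X = localPoint σ a b :=
    funext fun t => by simp [evalLocalPoint]
  rw [map_symIdeal_le_iff, hC, hX, localPoint_vecMul]
  exact ⟨fun _ => zero_mem _, Ideal.subset_span (by simp), Ideal.subset_span (by simp)⟩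

variable {σ a b} (hab : bracket σ a b = 1)
include hab

theorem evalLocalPoint_surjective : Function.Surjective (evalLocalPoint σ a b) := by
  rw [← AlgHom.range_eq_top, eq_top_iff, ← adjoin_range_X, Algebra.adjoin_le_iff]
  rintro _ ⟨l, rfl⟩
  fin_cases l
  · exact ⟨_, (evalLocalPoint_X_dotProduct_C σ a b a).trans (localPoint_dotProduct_left hab)⟩
  · exact ⟨_, (evalLocalPoint_X_dotProduct_C σ a b b).trans (localPoint_dotProduct_right hab)⟩

theorem ker_evalLocalPoint_le :
    RingHom.ker (evalLocalPoint σ a b) ≤ Ideal.span (Set.range (X ᵥ* σ.map C)) := by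
  set L := Ideal.span (Set.range (X ᵥ* σ.map C))
  let ρ : MvPolynomial (Fin 2) O →ₐ[O] MvPolynomial (Fin (m + 2)) O :=
    aeval ![X ⬝ᵥ (C ∘ a), X ⬝ᵥ (C ∘ b)]
  have hρ : (Ideal.Quotient.mkₐ O L).comp (ρ.comp (evalLocalPoint σ a b)) =
      Ideal.Quotient.mkₐ O L := by
    refine algHom_ext fun t => Ideal.Quotient.eq.2 ?_
    obtain ⟨p, hp⟩ := exists_bracket_smul_eq (σ.map C) (C ∘ a) (C ∘ b)
      (C ∘ Pi.single t 1 : _ → MvPolynomial (Fin (m + 2)) O)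
    have hXt : X ⬝ᵥ (C ∘ Pi.single t 1 : _ → MvPolynomial (Fin (m + 2)) O) = X t := by
      simp [dotProduct, Pi.single_apply]
    have hdot := congrArg (X ⬝ᵥ ·) hp
    simp only [bracket_map, hab, map_one, one_smul, dotProduct_add, dotProduct_smul, smul_eq_mul,
      dotProduct_mulVec, hXt] at hdot
    have hmem : (X ᵥ* σ.map C) ⬝ᵥ p ∈ L :=
      sum_mem fun l _ => Ideal.mul_mem_right _ _ (Ideal.subset_span ⟨l, rfl⟩)
    have heval : ρ (evalLocalPoint σ a b (X t)) =
        C (bracket σ (Pi.single t 1) b) * (X ⬝ᵥ (C ∘ a)) +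
          C (bracket σ a (Pi.single t 1)) * (X ⬝ᵥ (C ∘ b)) := by
      simp [ρ, evalLocalPoint, localPoint, algHom_C]
    change ρ (evalLocalPoint σ a b (X t)) - X t ∈ L
    rw [heval]
    convert neg_mem hmem using 1
    linear_combination -hdot
  intro z hz
  have hz' := DFunLike.congr_fun hρ z
  simp only [AlgHom.comp_apply, RingHom.mem_ker.1 hz, map_zero] at hz'
  exact Ideal.Quotient.eq_zero_iff_mem.1 hz'.symm

theorem height_comap_evalLocalPoint_le [IsNoetherianRing O] {h : MvPolynomial (Fin 2) O}
    (hh : Prime h) : ((Ideal.span {h}).comap (evalLocalPoint σ a b)).height ≤ (m + 1 : ℕ) := by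
  obtain ⟨h', rfl⟩ := evalLocalPoint_surjective hab h
  set L := Set.range (X ᵥ* σ.map (C : O →+* MvPolynomial (Fin (m + 2)) O))
  set P := (Ideal.span {evalLocalPoint σ a b h'}).comap (evalLocalPoint σ a b)
  have hprime : (Ideal.span {evalLocalPoint σ a b h'}).IsPrime :=
    (Ideal.span_singleton_prime hh.ne_zero).2 hh
  have hle : P ≤ Ideal.span (insert h' L) := by
    rw [Ideal.span_insert]
    intro z hz
    obtain ⟨c, hc⟩ := Ideal.mem_span_singleton.1 hz
    obtain ⟨c, rfl⟩ := evalLocalPoint_surjective hab c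
    have hker : z - h' * c ∈ RingHom.ker (evalLocalPoint σ a b) := by
      rw [RingHom.mem_ker, map_sub, map_mul, hc, sub_self]
    have hmem := Submodule.add_mem_sup (Ideal.mul_mem_right c _ (Ideal.mem_span_singleton_self h'))
      (ker_evalLocalPoint_le hab hker)
    rwa [add_sub_cancel] at hmem
  have hge : Ideal.span (insert h' L) ≤ P := by
    refine Ideal.span_le.2 (Set.insert_subset (Ideal.mem_span_singleton_self _) ?_)
    rintro _ ⟨l, rfl⟩
    simp [P, evalLocalPoint_X_vecMul]
  have hmin : P ∈ (Ideal.span (insert h' L)).minimalPrimes := by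
    rw [← le_antisymm hle hge, Ideal.minimalPrimes_eq_subsingleton_self]
    rfl
  have hcard : (insert h' L).ncard ≤ m + 1 :=
    (Set.ncard_insert_le h' L).trans
      (Nat.succ_le_succ ((Finite.card_range_le (X ᵥ* σ.map C)).trans_eq (by simp)))
  exact (Ideal.height_le_card_of_mem_minimalPrimes_span (Set.toFinite _) hmin).trans
    (by exact_mod_cast hcard)

theorem isRegularPair_localPoint [IsDomain O] [UniqueFactorizationMonoid O] [IsNoetherianRing O]
    (hheight : (m + 2 : ℕ) ≤ (symIdeal σ U V).height) :
    IsRegularPair (localPoint σ a b ⬝ᵥ U.map C *ᵥ localPoint σ a b)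
      (localPoint σ a b ⬝ᵥ V.map C *ᵥ localPoint σ a b) := by
  set q₁ := localPoint σ a b ⬝ᵥ U.map C *ᵥ localPoint σ a b
  set q₂ := localPoint σ a b ⬝ᵥ V.map C *ᵥ localPoint σ a b with hq₂
  have hcommon (h : MvPolynomial (Fin 2) O) (hh : Prime h) (h₁ : h ∣ q₁) : ¬h ∣ q₂ := by
    intro h₂
    have hle : symIdeal σ U V ≤ (Ideal.span {h}).comap (evalLocalPoint σ a b) :=
      Ideal.map_le_iff_le_comap.1 ((map_symIdeal_evalLocalPoint_le σ U V a b).trans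
        (Ideal.span_le.2 (Set.pair_subset (Ideal.mem_span_singleton.2 h₁)
          (Ideal.mem_span_singleton.2 h₂))))
    have := hheight.trans ((Ideal.height_mono hle).trans (height_comap_evalLocalPoint_le hab hh))
    norm_cast at this
    omega
  have hunit : ¬IsUnit q₂ := by
    intro hu
    have heval : eval (0 : Fin 2 → O) q₂ = 0 := by simp [hq₂, dotProduct, localPoint]
    exact not_isUnit_zero (heval ▸ hu.map (eval (0 : Fin 2 → O)))
  obtain ⟨h, hh, h₂⟩ : ∃ h, Prime h ∧ h ∣ q₂ := by
    by_cases hzero : q₂ = 0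
    · exact ⟨X 0, X_prime, hzero ▸ dvd_zero _⟩
    · obtain ⟨h, hh, h₂⟩ := WfDvdMonoid.exists_irreducible_factor hunit hzero
      exact ⟨h, hh.prime, h₂⟩
  refine .of_forall_prime_not_dvd (fun hzero => hcommon h hh (hzero ▸ dvd_zero _) h₂) hcommon

theorem pow_idealOfVars_mul_mem_localIdeal {w : Fin (m + 2) → O} {N : ℕ}
    (hw : ∀ r ∈ idealOfVars (Fin (m + 2)) O ^ N, r * (X ⬝ᵥ (C ∘ w)) ∈ symIdeal σ U V) :
    ∀ r ∈ idealOfVars (Fin 2) O ^ N,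
      r * (localPoint σ a b ⬝ᵥ (C ∘ w)) ∈ localIdeal σ U V a b := by
  have hvars : idealOfVars (Fin 2) O ≤
      (idealOfVars (Fin (m + 2)) O).map (evalLocalPoint σ a b) := by
    have hmem (v : Fin (m + 2) → O) : localPoint σ a b ⬝ᵥ (C ∘ v) ∈
        (idealOfVars (Fin (m + 2)) O).map (evalLocalPoint σ a b) := by
      rw [← evalLocalPoint_X_dotProduct_C]
      exact Ideal.mem_map_of_mem _ (sum_mem fun t _ =>
        Ideal.mul_mem_right _ _ (Ideal.subset_span ⟨t, rfl⟩))
    refine Ideal.span_le.2 ?_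
    rintro _ ⟨l, rfl⟩
    fin_cases l
    exacts [localPoint_dotProduct_left hab ▸ hmem a, localPoint_dotProduct_right hab ▸ hmem b]
  intro r hr
  rw [← evalLocalPoint_X_dotProduct_C]
  exact map_symIdeal_evalLocalPoint_le σ U V a b
    (mul_mem_map_of_mem_pow_map _ hw r (Ideal.pow_right_mono hvars N hr))

end LocalEvaluation

section Localization

open Matrix

variable {A : Type*} [CommRing A] {m : ℕ}

attribute [local instance] MvPolynomial.algebraMvPolynomial in
theorem height_symIdeal_le_height_symIdeal_map (σ : Matrix (Fin (m + 2)) (Fin m) A)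
    (U V : Matrix (Fin (m + 2)) (Fin (m + 2)) A) (S : Submonoid A) (O : Type*) [CommRing O]
    [Algebra A O] [IsLocalization S O] :
    (symIdeal σ U V).height ≤ (symIdeal (σ.map (algebraMap A O)) (U.map (algebraMap A O))
      (V.map (algebraMap A O))).height := by
  rw [← map_symIdeal_map, ← MvPolynomial.algebraMap_def]
  exact (Ideal.height_mono Ideal.le_comap_map).trans_eq
    (IsLocalization.height_under (S.map (C : A →+* MvPolynomial (Fin (m + 2)) A)) _)

theorem exists_pow_smul_eq_algebraMap_comp {ι κ O : Type*} [Finite ι] [Finite κ] [CommRing O]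
    [Algebra A O] (f : A) [IsLocalization.Away f O] (u : ι → O) (v : κ → O) :
    ∃ (M : ℕ) (u' : ι → A) (v' : κ → A), algebraMap A O (f ^ M) • u = algebraMap A O ∘ u' ∧
      algebraMap A O (f ^ M) • v = algebraMap A O ∘ v' := by
  obtain ⟨⟨_, M, rfl⟩, hM⟩ :=
    IsLocalization.exist_integer_multiples_of_finite (Submonoid.powers f) (Sum.elim u v)
  choose z hz using hM
  refine ⟨M, z ∘ Sum.inl, z ∘ Sum.inr, funext fun i => ?_, funext fun i => ?_⟩
  · simpa [Algebra.smul_def] using (hz (Sum.inl i)).symm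
  · simpa [Algebra.smul_def] using (hz (Sum.inr i)).symm

theorem exists_bracket_eq_one_and_isRegularPair {σ : Matrix (Fin (m + 2)) (Fin m) A}
    {U V : Matrix (Fin (m + 2)) (Fin (m + 2)) A} [IsNoetherianRing A]
    (hheight : (m + 2 : ℕ) ≤ (symIdeal σ U V).height) (i j : Fin (m + 2))
    (O : Type*) [CommRing O] [Algebra A O] [IsDomain O] [UniqueFactorizationMonoid O]
    [IsLocalization.Away (bracket σ (Pi.single i 1) (Pi.single j 1)) O] :
    ∃ a b, bracket (σ.map (algebraMap A O)) a b = 1 ∧ IsRegularPair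
      (localPoint (σ.map (algebraMap A O)) a b ⬝ᵥ
        (U.map (algebraMap A O)).map C *ᵥ localPoint (σ.map (algebraMap A O)) a b)
      (localPoint (σ.map (algebraMap A O)) a b ⬝ᵥ
        (V.map (algebraMap A O)).map C *ᵥ localPoint (σ.map (algebraMap A O)) a b) := by
  set f := bracket σ (Pi.single i 1) (Pi.single j 1)
  have : IsNoetherianRing O := IsLocalization.isNoetherianRing (Submonoid.powers f) O ‹_›
  have hab : bracket (σ.map (algebraMap A O))
      (IsLocalization.Away.invSelf (S := O) f • (algebraMap A O ∘ Pi.single i 1))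
      (algebraMap A O ∘ Pi.single j 1) = 1 := by
    rw [map_smul, LinearMap.smul_apply, bracket_map, smul_eq_mul, mul_comm,
      IsLocalization.Away.mul_invSelf]
  exact ⟨_, _, hab, isRegularPair_localPoint _ _ hab (hheight.trans
    (height_symIdeal_le_height_symIdeal_map σ U V (Submonoid.powers f) O))⟩

section

variable [IsDomain A] [UniqueFactorizationMonoid A] [IsNoetherianRing A]
  {σ : Matrix (Fin (m + 2)) (Fin m) A} {U V : Matrix (Fin (m + 2)) (Fin (m + 2)) A}

theorem exists_eq_mulVec_of_generatorMap_eq (hσ : 2 ≤ (bracketIdeal σ).height)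
    (hheight : (m + 2 : ℕ) ≤ (symIdeal σ U V).height) {τ : Fin (m + 2) → A} {p : Fin m → A}
    (hτ : generatorMap σ U V τ = σ *ᵥ p) : ∃ q, τ = σ *ᵥ q := by
  obtain ⟨i, j, hij⟩ := exists_bracket_single_ne_zero (one_le_two.trans hσ)
  let O := Localization.Away (bracket σ (Pi.single i 1) (Pi.single j 1))
  have hpowers := powers_le_nonZeroDivisors_of_noZeroDivisors hij
  have : IsDomain O := IsLocalization.isDomain_localization hpowers
  obtain ⟨a, b, hab, hq⟩ := exists_bracket_eq_one_and_isRegularPair hheight i j O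
  have hzero : localPoint (σ.map (algebraMap A O)) a b ⬝ᵥ
      (C ∘ generatorMap (σ.map (algebraMap A O)) (U.map (algebraMap A O)) (V.map (algebraMap A O))
        (algebraMap A O ∘ τ)) = 0 := by
    have hmulVec : algebraMap A O ∘ (σ *ᵥ p) = σ.map (algebraMap A O) *ᵥ (algebraMap A O ∘ p) :=
      funext fun t => (algebraMap A O).map_mulVec σ p t
    rw [generatorMap_map, hτ, hmulVec, localPoint_dotProduct_C_mulVec]
  have hbracket (s : Fin (m + 2) → A) : bracket σ τ s = 0 := by
    refine IsLocalization.injective O hpowers ?_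
    rw [← bracket_map, map_zero]
    exact bracket_eq_zero_of_localPoint_dotProduct_generatorMap_mem hab hq
      (hzero ▸ zero_mem _) _
  obtain ⟨p, hp⟩ := exists_bracket_smul_eq σ (Pi.single i 1) (Pi.single j 1) τ
  refine exists_eq_mulVec_of_smul_eq hσ hij (p := p) ?_
  simpa [hbracket, bracket_swap σ _ τ] using hp

theorem exists_pow_smul_eq_generatorMap_add (hheight : (m + 2 : ℕ) ≤ (symIdeal σ U V).height)
    {w : Fin (m + 2) → A} {N : ℕ}
    (hw : ∀ r ∈ idealOfVars (Fin (m + 2)) A ^ N, r * (X ⬝ᵥ (C ∘ w)) ∈ symIdeal σ U V)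
    {i j : Fin (m + 2)} (hij : bracket σ (Pi.single i 1) (Pi.single j 1) ≠ 0) :
    ∃ M τ p, bracket σ (Pi.single i 1) (Pi.single j 1) ^ M • w =
      generatorMap σ U V τ + σ *ᵥ p := by
  set f := bracket σ (Pi.single i 1) (Pi.single j 1)
  let O := Localization.Away f
  have hpowers := powers_le_nonZeroDivisors_of_noZeroDivisors hij
  have : IsDomain O := IsLocalization.isDomain_localization hpowers
  obtain ⟨a, b, hab, hq⟩ := exists_bracket_eq_one_and_isRegularPair hheight i j O
  have hwO : ∀ r ∈ idealOfVars (Fin (m + 2)) O ^ N, r * (X ⬝ᵥ (C ∘ algebraMap A O ∘ w)) ∈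
      symIdeal (σ.map (algebraMap A O)) (U.map (algebraMap A O)) (V.map (algebraMap A O)) := by
    have hvars : idealOfVars (Fin (m + 2)) O ≤
        (idealOfVars (Fin (m + 2)) A).map (MvPolynomial.map (algebraMap A O)) := by
      refine Ideal.span_le.2 ?_
      rintro _ ⟨t, rfl⟩
      exact map_X (algebraMap A O) t ▸ Ideal.mem_map_of_mem _ (Ideal.subset_span ⟨t, rfl⟩)
    have hX : MvPolynomial.map (algebraMap A O) (X ⬝ᵥ (C ∘ w)) =
        X ⬝ᵥ (C ∘ algebraMap A O ∘ w) := by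
      simp [dotProduct]
    rw [← map_symIdeal_map, ← hX]
    exact fun r hr => mul_mem_map_of_mem_pow_map _ hw r (Ideal.pow_right_mono hvars N hr)
  obtain ⟨τ, p, hτp⟩ := exists_eq_generatorMap_add_of_pow_idealOfVars_mul_mem hab hq
    (pow_idealOfVars_mul_mem_localIdeal _ _ hab hwO)
  obtain ⟨M, τ', p', hτ', hp'⟩ := exists_pow_smul_eq_algebraMap_comp f τ p
  refine ⟨M, τ', p', funext fun t => IsLocalization.injective O hpowers ?_⟩
  have hmap := congrFun (generatorMap_map (algebraMap A O) σ U V τ') t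
  have hmulVec := (algebraMap A O).map_mulVec σ p' t
  rw [← hτ', map_smul, Pi.smul_apply, Function.comp_apply] at hmap
  rw [← hp', mulVec_smul] at hmulVec
  simp only [Pi.add_apply, Pi.smul_apply, smul_eq_mul, map_add, map_mul, hmulVec, ← hmap]
  rw [← mul_add, ← Pi.add_apply, ← hτp, Function.comp_apply]

theorem exists_eq_generatorMap_add (hA : IsPairUnmixed A) (hσ : 3 ≤ (bracketIdeal σ).height)
    (hheight : (m + 2 : ℕ) ≤ (symIdeal σ U V).height) {w : Fin (m + 2) → A} {N : ℕ}
    (hw : ∀ r ∈ idealOfVars (Fin (m + 2)) A ^ N, r * (X ⬝ᵥ (C ∘ w)) ∈ symIdeal σ U V) :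
    ∃ τ p, w = generatorMap σ U V τ + σ *ᵥ p :=
  exists_eq_add_mulVec_of_pow_smul hA hσ _ (generatorMap_mulVec σ U V)
    (fun _ _ => exists_eq_mulVec_of_generatorMap_eq (le_trans (by norm_num) hσ) hheight) w
    fun _ _ => exists_pow_smul_eq_generatorMap_add hheight hw

end

end Localization

section LinearForms

/-- The linear form `∑ j, v j • X j` with coefficient vector `v`. -/
def linearForm (R : Type*) [CommRing R] {ι : Type*} [Fintype ι] :
    (ι → R) →ₗ[R] MvPolynomial ι R :=
  Fintype.linearCombination R X

theorem linearForm_apply {R ι : Type*} [CommRing R] [Fintype ι] (v : ι → R) :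
    linearForm R v = ∑ j, C (v j) * X j := by
  simp [linearForm, Fintype.linearCombination_apply, smul_eq_C_mul]

theorem linearForm_single {R ι : Type*} [CommRing R] [Fintype ι] [DecidableEq ι] (j : ι) :
    linearForm R (Pi.single j 1) = X j := by
  simp [linearForm, Fintype.linearCombination_apply_single]

theorem linearForm_injective {R ι : Type*} [CommRing R] [Fintype ι] :
    Function.Injective (linearForm R (ι := ι)) :=
  linearIndependent_iff_injective_fintypeLinearCombination.1 (linearIndependent_X ι R)

theorem map_linearForm {R S ι : Type*} [CommRing R] [CommRing S] [Fintype ι] (f : R →+* S)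
    (v : ι → R) : map f (linearForm R v) = linearForm S (f ∘ v) := by
  simp [linearForm_apply]

theorem aeval_linearForm {R A ι : Type*} [CommRing R] [CommRing A] [Algebra R A] [Fintype ι]
    [DecidableEq ι] (f : (ι → R) →ₗ[R] A) (v : ι → R) :
    aeval (fun j => f (Pi.single j 1)) (linearForm R v) = f v := by
  conv_rhs => rw [pi_eq_sum_univ' v]
  simp [linearForm, Fintype.linearCombination_apply]

variable {K ι : Type*} [Field K] [Fintype ι]

/-- The ideal of polynomials generated by a space of linear forms; its zero locus is the
linear subspace annihilated by `W`. -/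
def linearIdeal (W : Submodule K (ι → K)) : Ideal (MvPolynomial ι K) :=
  Ideal.span (linearForm K '' W)

theorem linearIdeal_le_iff {W : Submodule K (ι → K)} {I : Ideal (MvPolynomial ι K)} :
    linearIdeal W ≤ I ↔ ∀ v ∈ W, linearForm K v ∈ I :=
  Ideal.span_le.trans Set.forall_mem_image

theorem exists_ker_eq_linearIdeal (W : Submodule K (ι → K)) :
    ∃ F : MvPolynomial ι K →ₐ[K] MvPolynomial ι K,
      RingHom.ker F = linearIdeal W ∧ ∀ v, F (linearForm K v) = 0 → v ∈ W := by
  classical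
  obtain ⟨W', hW⟩ := W.exists_isCompl
  let e := W'.projection W hW.symm
  have hker (v : ι → K) : e v = 0 ↔ v ∈ W := Submodule.projection_apply_eq_zero_iff hW.symm
  -- The substitution induced by a projection with kernel `W`.
  let F : MvPolynomial ι K →ₐ[K] MvPolynomial ι K :=
    aeval fun j => (linearForm K ∘ₗ e) (Pi.single j 1)
  have hF (v : ι → K) : F (linearForm K v) = linearForm K (e v) :=
    aeval_linearForm (linearForm K ∘ₗ e) v
  have hmk : (Ideal.Quotient.mkₐ K (linearIdeal W)).comp F = Ideal.Quotient.mkₐ K _ := by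
    refine algHom_ext fun j => Eq.symm (Ideal.Quotient.eq.2 ?_)
    rw [← linearForm_single, RingHom.coe_coe, hF, ← map_sub]
    exact Ideal.subset_span ⟨_, Submodule.sub_projection_mem hW.symm _, rfl⟩
  refine ⟨F, le_antisymm (fun z hz => ?_) (linearIdeal_le_iff.2 fun v hv => ?_), fun v hv => ?_⟩
  · rw [← Ideal.Quotient.eq_zero_iff_mem, ← Ideal.Quotient.mkₐ_eq_mk K, ← hmk,
      AlgHom.comp_apply, (RingHom.mem_ker).1 hz, map_zero]
  · rw [RingHom.mem_ker, hF, (hker v).2 hv, map_zero]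
  · exact (hker v).1 (linearForm_injective (by rw [← hF, hv, map_zero]))

instance linearIdeal_isPrime (W : Submodule K (ι → K)) : (linearIdeal W).IsPrime := by
  obtain ⟨F, hF, -⟩ := exists_ker_eq_linearIdeal W
  exact hF ▸ RingHom.ker_isPrime F

theorem linearForm_mem_linearIdeal_iff {W : Submodule K (ι → K)} {v : ι → K} :
    linearForm K v ∈ linearIdeal W ↔ v ∈ W := by
  obtain ⟨F, hF, hW⟩ := exists_ker_eq_linearIdeal W
  exact ⟨fun hv => hW v (RingHom.mem_ker.1 (hF ▸ hv)), fun hv => Ideal.subset_span ⟨v, hv, rfl⟩⟩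

theorem le_height_linearIdeal_span {r : ℕ} {v : Fin r → ι → K} (hv : LinearIndependent K v) :
    (r : ℕ∞) ≤ (linearIdeal (Submodule.span K (Set.range v))).height := by
  induction r with
  | zero => simp
  | succ r ih =>
    obtain ⟨hinit, hlast⟩ := linearIndependent_finSucc'.1 hv
    have hlt : linearIdeal (Submodule.span K (Set.range (Fin.init v))) <
        linearIdeal (Submodule.span K (Set.range v)) := by
      refine SetLike.lt_iff_le_and_exists.2 ⟨linearIdeal_le_iff.2 fun w hw => ?_,
        linearForm K (v (Fin.last r)), ?_, mt linearForm_mem_linearIdeal_iff.1 hlast⟩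
      · refine linearForm_mem_linearIdeal_iff.2 (Submodule.span_mono ?_ hw)
        exact Set.range_comp_subset_range Fin.castSucc v
      · exact linearForm_mem_linearIdeal_iff.2 (Submodule.subset_span ⟨_, rfl⟩)
    rw [Nat.cast_add, Nat.cast_one]
    exact (add_le_add_left (ih hinit) 1).trans (Ideal.height_add_one_le_of_lt_of_isPrime hlt)

theorem le_height_of_linearForm_mem {r : ℕ} {v : Fin r → ι → K} (hv : LinearIndependent K v)
    {I : Ideal (MvPolynomial ι K)} (hI : ∀ i, linearForm K (v i) ∈ I) : (r : ℕ∞) ≤ I.height :=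
  (le_height_linearIdeal_span hv).trans <| Ideal.height_mono <| by
    refine linearIdeal_le_iff.2 fun w hw => ?_
    have hle : Submodule.span K (Set.range v) ≤ (I.restrictScalars K).comap (linearForm K) :=
      Submodule.span_le.2 (Set.range_subset_iff.2 hI)
    exact hle hw

end LinearForms

section Fiber

variable {ι : Type*} [Fintype ι]

attribute [local instance] MvPolynomial.algebraMvPolynomial in
theorem le_height_of_linearForm_mem_of_comap_eq_bot {D : Type*} [CommRing D] [IsDomain D]
    {P : Ideal (MvPolynomial ι D)} [P.IsPrime] (hP : P.comap C = ⊥) {r : ℕ}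
    {v : Fin r → ι → D} (hv : LinearIndependent D v) (hmem : ∀ i, linearForm D (v i) ∈ P) :
    (r : ℕ∞) ≤ P.height := by
  let K := FractionRing D
  let S := (nonZeroDivisors D).map (C : D →+* MvPolynomial ι D)
  have hS : Disjoint (S : Set (MvPolynomial ι D)) P := by
    refine Set.disjoint_left.2 ?_
    rintro _ ⟨a, ha, rfl⟩ haP
    refine nonZeroDivisors.ne_zero ha ?_
    rwa [← Ideal.mem_bot, ← hP]
  have hind : LinearIndependent K fun i => algebraMap D K ∘ v i := by
    rw [← LinearIndependent.iff_fractionRing (R := D)]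
    refine hv.map' ((Algebra.linearMap D K).compLeft ι) (LinearMap.ker_eq_bot.2 ?_)
    exact (IsFractionRing.injective D K).comp_left
  have := IsLocalization.isPrime_of_isPrime_disjoint S (MvPolynomial ι K) P ‹_› hS
  rw [← IsLocalization.under_map_of_isPrime_disjoint S (MvPolynomial ι K) ‹P.IsPrime› hS,
    IsLocalization.height_under S]
  refine le_height_of_linearForm_mem hind fun i => ?_
  rw [← map_linearForm]
  exact Ideal.mem_map_of_mem _ (hmem i)

theorem height_comap_C_add_le_height {R : Type*} [CommRing R] [IsNoetherianRing R]
    {P : Ideal (MvPolynomial ι R)} [P.IsPrime] {r : ℕ} {v : Fin r → ι → R}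
    (hv : LinearIndependent (R ⧸ P.comap (C : R →+* MvPolynomial ι R))
      fun i => Ideal.Quotient.mk (P.comap C) ∘ v i)
    (hmem : ∀ i, linearForm R (v i) ∈ P) : (P.comap C).height + r ≤ P.height := by
  classical
  set p : Ideal R := P.comap C
  have : p.IsPrime := Ideal.comap_isPrime _ _
  have : P.LiesOver p := ⟨rfl⟩
  let e := (quotientEquivQuotientMvPolynomial (σ := ι) p).toRingEquiv
  let P' := P.map (Ideal.Quotient.mk (p.map (C : R →+* MvPolynomial ι R)))
  have hmk (z : MvPolynomial ι R) : Ideal.Quotient.mk (p.map C) z ∈ P' ↔ z ∈ P :=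
    Ideal.mem_quotient_iff_mem Ideal.map_comap_le
  have he (z : MvPolynomial ι R) : e (map (Ideal.Quotient.mk p) z) = Ideal.Quotient.mk _ z := by
    refine congrFun (congrArg DFunLike.coe (MvPolynomial.ringHom_ext
      (f := e.toRingHom.comp (map (Ideal.Quotient.mk p))) (g := Ideal.Quotient.mk (p.map C))
      (fun a => ?_) fun j => ?_)) z
    · simp [e, quotientEquivQuotientMvPolynomial]
    · simp [e, quotientEquivQuotientMvPolynomial]
  have : P'.IsPrime := Ideal.isPrime_map_quotientMk_of_isPrime Ideal.map_comap_le
  have hbot : (P'.comap e).comap C = ⊥ := by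
    refine (Submodule.eq_bot_iff _).2 fun a ha => ?_
    obtain ⟨a, rfl⟩ := Ideal.Quotient.mk_surjective a
    rwa [Ideal.mem_comap, Ideal.mem_comap, ← map_C, he, hmk, ← Ideal.mem_comap,
      ← Ideal.Quotient.eq_zero_iff_mem] at ha
  rw [Ideal.height_eq_height_add_of_liesOver_of_hasGoingDown p P]
  refine add_le_add_right ?_ _
  calc (r : ℕ∞) ≤ (P'.comap e).height :=
        le_height_of_linearForm_mem_of_comap_eq_bot hbot hv fun i => by
          rw [← map_linearForm, Ideal.mem_comap, he, hmk]
          exact hmem i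
    _ = P'.height := e.height_comap P'

end Fiber

section Presentation

open TensorProduct

theorem finrank_tensorProduct_residueField_le {R E : Type*} [CommRing R] [AddCommGroup E]
    [Module R E] (p : Ideal R) [p.IsPrime] {s : Finset (LocalizedModule p.primeCompl E)}
    (hs : Submodule.span (Localization.AtPrime p) (s : Set (LocalizedModule p.primeCompl E)) = ⊤) :
    Module.finrank p.ResidueField (p.ResidueField ⊗[R] E) ≤ s.card := by
  classical
  let M := LocalizedModule p.primeCompl E
  have hbase := IsLocalizedModule.isBaseChange p.primeCompl (Localization.AtPrime p)
    (LocalizedModule.mkLinearMap p.primeCompl E)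
  let equiv : p.ResidueField ⊗[R] E ≃ₗ[p.ResidueField]
      p.ResidueField ⊗[Localization.AtPrime p] M :=
    (AlgebraTensorModule.cancelBaseChange R (Localization.AtPrime p) p.ResidueField
      p.ResidueField E).symm ≪≫ₗ
      AlgebraTensorModule.congr (LinearEquiv.refl p.ResidueField p.ResidueField) hbase.equiv
  let t := s.image (TensorProduct.mk (Localization.AtPrime p) p.ResidueField M 1)
  have hspan : Submodule.span p.ResidueField
      (t : Set (p.ResidueField ⊗[Localization.AtPrime p] M)) = ⊤ := by
    rw [Finset.coe_image, ← Submodule.baseChange_span, hs, Submodule.baseChange_top]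
  rw [equiv.finrank_eq, ← finrank_top, ← hspan]
  exact (finrank_span_finset_le_card _).trans Finset.card_image_le

theorem rank_map_add_finrank_tensorProduct {R E K : Type*} [CommRing R] [AddCommGroup E]
    [Module R E] [Field K] [Algebra R K] {n d : ℕ} (φ : Matrix (Fin n) (Fin d) R)
    {π : (Fin n → R) →ₗ[R] E} (hπ : Function.Surjective π)
    (hker : LinearMap.ker π = LinearMap.range φ.mulVecLin) :
    (φ.map (algebraMap R K)).rank + Module.finrank K (K ⊗[R] E) = n := by
  have := (algebraMap R K).domain_nontrivial
  let F := φ.mulVecLin.baseChange K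
  let b (m : ℕ) := Algebra.TensorProduct.basis K (Pi.basisFun R (Fin m))
  have hF : Matrix.toLin (b d) (b n) (φ.map (algebraMap R K)) = F := by
    rw [← Matrix.toLin_toMatrix (b d) (b n) F, LinearMap.toMatrix_baseChange]
    congr 2
    ext i j
    simp [LinearMap.toMatrix_apply]
  have hexact : LinearMap.ker (π.baseChange K) = LinearMap.range F := by
    ext z
    exact lTensor_exact K (LinearMap.exact_iff.2 hker) hπ z
  have hrank := (π.baseChange K).finrank_range_add_finrank_ker
  rw [LinearMap.range_eq_top.2 (LinearMap.baseChange_surjective K hπ), finrank_top, hexact, ← hF,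
    ← Matrix.rank_eq_finrank_range_toLin, Module.finrank_eq_card_basis (b n),
    Fintype.card_fin] at hrank
  rw [add_comm, hrank]

theorem exists_linearIndependent_col_comp {K : Type*} [Field K] {n d : ℕ}
    (M : Matrix (Fin n) (Fin d) K) :
    ∃ f : Fin M.rank → Fin d, LinearIndependent K (M.col ∘ f) := by
  rw [M.rank_eq_finrank_span_cols]
  obtain ⟨v, hv, -, hind⟩ := Submodule.exists_fun_fin_finrank_span_eq K (Set.range M.col)
  choose f hf using hv
  obtain rfl : M.col ∘ f = v := funext hf
  exact ⟨f, hind⟩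

theorem height_comap_C_add_rank_le_height {R : Type*} [CommRing R] [IsNoetherianRing R]
    {n d : ℕ} {φ : Matrix (Fin n) (Fin d) R} {P : Ideal (MvPolynomial (Fin n) R)} [P.IsPrime]
    (hP : ∀ i, linearForm R (φ.col i) ∈ P) :
    (P.comap C).height + (φ.map (algebraMap R (P.comap C).ResidueField)).rank ≤ P.height := by
  set p : Ideal R := P.comap C
  obtain ⟨f, hf⟩ := exists_linearIndependent_col_comp (φ.map (algebraMap R p.ResidueField))
  refine height_comap_C_add_le_height (v := φ.col ∘ f) ?_ fun i => hP _
  refine LinearIndependent.of_comp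
    ((Algebra.linearMap (R ⧸ p) p.ResidueField).compLeft (Fin n)) ?_
  exact (LinearIndependent.iff_fractionRing (R := R ⧸ p) (K := p.ResidueField)).2 hf

theorem le_height_of_forall_linearForm_col_mem {R E : Type*} [CommRing R] [IsDomain R]
    [IsNoetherianRing R] [AddCommGroup E] [Module R E] {d e : ℕ}
    {φ : Matrix (Fin (d + e)) (Fin d) R} (hφ : Function.Injective φ.mulVecLin)
    {π : (Fin (d + e) → R) →ₗ[R] E} (hπ : Function.Surjective π)
    (hker : LinearMap.ker π = LinearMap.range φ.mulVecLin)
    (hG : ∀ (p : Ideal R) (_ : p.IsPrime) (c : ℕ),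
      ringKrullDim (Localization.AtPrime p) = (c : WithBot ℕ∞) → 1 ≤ c → c ≤ d - 1 →
      ∃ s : Finset (LocalizedModule p.primeCompl E), s.card ≤ c + e - 1 ∧
        Submodule.span (Localization.AtPrime p)
          (s : Set (LocalizedModule p.primeCompl E)) = ⊤)
    {P : Ideal (MvPolynomial (Fin (d + e)) R)} [P.IsPrime]
    (hP : ∀ i, linearForm R (φ.col i) ∈ P) : (d : ℕ∞) ≤ P.height := by
  set p : Ideal R := P.comap C
  have : p.IsPrime := Ideal.comap_isPrime _ _
  by_cases hbot : p = ⊥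
  · exact le_height_of_linearForm_mem_of_comap_eq_bot hbot
      (Matrix.mulVec_injective_iff.1 hφ) hP
  obtain ⟨c, hc⟩ := ENat.ne_top_iff_exists.1 (Ideal.height_ne_top_of_isPrime (I := p))
  have hpos : c ≠ 0 := by
    rintro rfl
    exact hbot (Ideal.height_eq_zero_iff_eq_bot.1 hc.symm)
  refine le_trans ?_ (height_comap_C_add_rank_le_height hP)
  change (d : ℕ∞) ≤ p.height + (φ.map (algebraMap R p.ResidueField)).rank
  rw [← hc, ← Nat.cast_add, Nat.cast_le]
  rcases lt_or_ge c d with hcd | hcd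
  · obtain ⟨s, hcard, hs⟩ := hG p ‹_› c
      (by rw [IsLocalization.AtPrime.ringKrullDim_eq_height p, ← hc]; rfl) (by omega) (by omega)
    have hfin := finrank_tensorProduct_residueField_le p hs
    have hrank := rank_map_add_finrank_tensorProduct (K := p.ResidueField) φ hπ hker
    omega
  · omega

end Presentation

section Degrees

open Matrix

variable {R : Type*} [CommRing R] {ι : Type*} {m : ℕ}

theorem isHomogeneous_single_one {κ : Type*} [DecidableEq κ] (s t : κ) :
    ((Pi.single s 1 : κ → MvPolynomial ι R) t).IsHomogeneous 0 := by
  rw [Pi.single_apply]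
  split_ifs
  exacts [isHomogeneous_one ι R, isHomogeneous_zero ι R 0]

variable {σ : Matrix (Fin (m + 2)) (Fin m) (MvPolynomial ι R)} (hσ : ∀ t j, (σ t j).IsHomogeneous 1)
include hσ

theorem isHomogeneous_bracket {w w' : Fin (m + 2) → MvPolynomial ι R} {a b : ℕ}
    (hw : ∀ t, (w t).IsHomogeneous a) (hw' : ∀ t, (w' t).IsHomogeneous b) :
    (bracket σ w w').IsHomogeneous (a + b + m) := by
  let rowDegree : Fin (m + 2) → ℕ := vecCons a (vecCons b 1)
  have hsum : ∑ i, rowDegree i = a + b + m := by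
    simp [rowDegree, Fin.sum_univ_succ, add_assoc]
  have hentry (i j : Fin (m + 2)) :
      (vecCons w (vecCons w' σ.col) i j).IsHomogeneous (rowDegree i) := by
    refine Fin.cases (hw j) (fun i => ?_) i
    exact Fin.cases (hw' j) (fun i => hσ j i) i
  rw [bracket_apply, det_apply]
  refine IsHomogeneous.sum _ _ _ fun p _ => ?_
  rw [← hsum, ← Equiv.sum_comp p]
  exact (homogeneousSubmodule ι R _).smul_of_tower_mem _
    (IsHomogeneous.prod _ _ _ fun i _ => hentry (p i) i)

theorem isHomogeneous_generatorMap {U V : Matrix (Fin (m + 2)) (Fin (m + 2)) (MvPolynomial ι R)}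
    (hU : ∀ t j, (U t j).IsHomogeneous 1) (hV : ∀ t j, (V t j).IsHomogeneous 1)
    {τ : Fin (m + 2) → MvPolynomial ι R} (hτ : ∀ t, (τ t).IsHomogeneous 0) (t : Fin (m + 2)) :
    (generatorMap σ U V τ t).IsHomogeneous (2 * m + 2) := by
  have hvec (s : Fin (m + 2)) : (bracketVec σ τ s).IsHomogeneous m := by
    simpa [bracketVec_apply] using isHomogeneous_bracket hσ hτ (isHomogeneous_single_one s)
  have hmulVec (s : Fin (m + 2)) : ((U *ᵥ bracketVec σ τ) s).IsHomogeneous (1 + m) :=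
    IsHomogeneous.sum _ _ _ fun r _ => (hU s r).mul (hvec r)
  have hvecMul (s : Fin (m + 2)) : ((bracketVec σ τ ᵥ* V) s).IsHomogeneous (m + 1) :=
    IsHomogeneous.sum _ _ _ fun r _ => (hvec r).mul (hV r s)
  rw [generatorMap_apply]
  refine IsHomogeneous.add ?_ ?_
  · rw [show 2 * m + 2 = 1 + m + 1 + m by ring]
    exact isHomogeneous_bracket hσ hmulVec (hV · t)
  · rw [show 2 * m + 2 = 1 + (m + 1) + m by ring]
    exact isHomogeneous_bracket hσ (hU t) hvecMul

end Degrees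

theorem exists_eq_sum_C_mul_X_mul_X {R ι : Type*} [CommSemiring R] [Fintype ι]
    {q : MvPolynomial ι R} (hq : q.IsHomogeneous 2) :
    ∃ c : ι → ι → R, q = ∑ s, ∑ r, C (c s r) * (X s * X r) := by
  classical
  rw [← mem_homogeneousSubmodule, ← homogeneousSubmodule_one_pow,
    homogeneousSubmodule_one_eq_span_X, pow_two, Submodule.span_mul_span] at hq
  induction hq using Submodule.span_induction with
  | mem x hx =>
    obtain ⟨_, ⟨s, rfl⟩, _, ⟨r, rfl⟩, rfl⟩ := hx
    refine ⟨fun s' r' => if s' = s ∧ r' = r then 1 else 0, ?_⟩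
    simp [apply_ite C, ite_and, ite_mul]
  | zero => exact ⟨0, by simp⟩
  | add x y _ _ hx hy =>
    obtain ⟨c, rfl⟩ := hx
    obtain ⟨c', rfl⟩ := hy
    exact ⟨c + c', by simp [add_mul, Finset.sum_add_distrib]⟩
  | smul a x _ hx =>
    obtain ⟨c, rfl⟩ := hx
    exact ⟨a • c, by simp [Finset.smul_sum, smul_eq_C_mul, mul_assoc]⟩

theorem card_le_card_of_span_eq_range {R K M ι : Type*} [CommRing R] [CommRing K] [Nontrivial K]
    [AddCommGroup M] [Module R M] [Fintype ι] (f : R →+* K) {F : (ι → R) →ₗ[R] M}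
    (hF : ∀ τ, F τ = 0 → f ∘ τ = 0) {s : Finset M}
    (hs : Submodule.span R (s : Set M) = LinearMap.range F) : Fintype.card ι ≤ s.card := by
  classical
  have hlift (v : s) : ∃ τ, F τ = v := hs.le (Submodule.subset_span v.2)
  have hcoeff (i : ι) : ∃ c : s → R, ∑ v, c v • (v : M) = F (Pi.single i 1) := by
    obtain ⟨c, -, hc⟩ := Submodule.mem_span_finset.1 (hs.ge ⟨Pi.single i 1, rfl⟩)
    exact ⟨fun v => c v, by rw [← hc, ← Finset.sum_coe_sort s fun v => c v • v]⟩
  choose τ hτ using hlift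
  choose c hc using hcoeff
  have hone : (1 : Matrix ι ι K) = (Matrix.of c).map f * (Matrix.of τ).map f := by
    ext i j
    have hker : F (Pi.single i 1 - ∑ v, c i v • τ v) = 0 := by
      simp only [map_sub, map_sum, map_smul, hτ, hc, sub_self]
    have h := congrFun (hF _ hker) j
    rw [Function.comp_apply, Pi.sub_apply, map_sub, Pi.zero_apply, sub_eq_zero] at h
    simpa [-Finset.univ_eq_attach, Matrix.mul_apply, Matrix.one_apply, Pi.single_apply,
      eq_comm (a := j), apply_ite f] using h
  calc Fintype.card ι = (1 : Matrix ι ι K).rank := Matrix.rank_one.symm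
    _ ≤ ((Matrix.of c).map f).rank := hone ▸ Matrix.rank_mul_le_left _ _
    _ ≤ s.card := (Matrix.rank_le_card_width _).trans_eq (Fintype.card_coe s)

section LinearPart

open Matrix

variable {A : Type*} [CommRing A] {m : ℕ} {σ : Matrix (Fin (m + 2)) (Fin m) A}
  {U V : Matrix (Fin (m + 2)) (Fin (m + 2)) A}

/- The map of `A[x]` to the square-zero extension of `A` by `Q` that sends a linear form to the
image of its coefficient vector kills all quadrics. -/
theorem eq_zero_of_X_dotProduct_mem_symIdeal {Q : Type*} [AddCommGroup Q] [Module A Q]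
    [Module Aᵐᵒᵖ Q] [IsCentralScalar A Q] {q : (Fin (m + 2) → A) →ₗ[A] Q}
    (hq : ∀ l, q (σ.col l) = 0) {a : Fin (m + 2) → A} (ha : X ⬝ᵥ (C ∘ a) ∈ symIdeal σ U V) :
    q a = 0 := by
  let x (t : Fin (m + 2)) : TrivSqZeroExt A Q := TrivSqZeroExt.inr (q (Pi.single t 1))
  let f : MvPolynomial (Fin (m + 2)) A →+* TrivSqZeroExt A Q := eval₂Hom (algebraMap A _) x
  have hX : f ∘ X = x := funext (eval₂Hom_X' _ x)
  have hC : f.comp C = algebraMap A (TrivSqZeroExt A Q) := RingHom.ext (eval₂Hom_C _ x)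
  have hlinear (b : Fin (m + 2) → A) :
      x ⬝ᵥ (algebraMap A (TrivSqZeroExt A Q) ∘ b) = TrivSqZeroExt.inr (q b) := by
    conv_rhs => rw [pi_eq_sum_univ' b]
    simp [x, dotProduct, TrivSqZeroExt.algebraMap_eq_inl, TrivSqZeroExt.inr_mul_inl,
      TrivSqZeroExt.inr_sum]
  have hquadric (M : Matrix (Fin (m + 2)) (Fin (m + 2)) A) :
      x ⬝ᵥ M.map (algebraMap A (TrivSqZeroExt A Q)) *ᵥ x = 0 := by
    simp [x, dotProduct, mulVec, Finset.mul_sum, mul_left_comm (TrivSqZeroExt.inr _)]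
  have hmap : (symIdeal σ U V).map f ≤ ⊥ := by
    rw [map_symIdeal_le_iff, hX, hC, hquadric, hquadric]
    refine ⟨fun l => ?_, zero_mem _, zero_mem _⟩
    exact (hlinear (σ.col l)).trans (by rw [hq, TrivSqZeroExt.inr_zero])
  have hzero : f (X ⬝ᵥ (C ∘ a)) = 0 := Ideal.map_le_iff_le_comap.1 hmap ha
  rw [RingHom.map_dotProduct, hX, ← Function.comp_assoc, ← RingHom.coe_comp, hC, hlinear] at hzero
  exact TrivSqZeroExt.inr_injective hzero

theorem X_dotProduct_mem_symIdeal_iff {a : Fin (m + 2) → A} :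
    X ⬝ᵥ (C ∘ a) ∈ symIdeal σ U V ↔ ∃ p, a = σ *ᵥ p := by
  constructor
  · intro ha
    have hq (l : Fin m) : (LinearMap.range σ.mulVecLin).mkQ (σ.col l) = 0 :=
      (Submodule.Quotient.mk_eq_zero _).2 ⟨Pi.single l 1, mulVec_single_one σ l⟩
    obtain ⟨p, hp⟩ := (Submodule.Quotient.mk_eq_zero _).1
      (eq_zero_of_X_dotProduct_mem_symIdeal (U := U) (V := V) hq ha)
    exact ⟨p, hp.symm⟩
  · rintro ⟨p, rfl⟩
    have hcomp : (C : A →+* MvPolynomial (Fin (m + 2)) A) ∘ (σ *ᵥ p) = σ.map C *ᵥ (C ∘ p) :=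
      funext fun t => RingHom.map_mulVec C σ p t
    rw [hcomp, dotProduct_mulVec]
    exact Ideal.sum_mem _ fun l _ => Ideal.mul_mem_right _ _ (X_vecMul_mem_symIdeal σ U V l)

theorem X_mul_X_mul_X_dotProduct_generatorMap_mem_symIdeal (τ : Fin (m + 2) → A)
    (s t : Fin (m + 2)) :
    X s * X t * (X ⬝ᵥ (C ∘ generatorMap σ U V τ)) ∈ symIdeal σ U V := by
  have hσ := X_vecMul_mem_symIdeal σ U V
  have hU := X_dotProduct_mulVec_mem_symIdeal_left σ U V
  have hV := X_dotProduct_mulVec_mem_symIdeal_right σ U V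
  have hdot (r : Fin (m + 2)) : X ⬝ᵥ Pi.single r 1 = (X r : MvPolynomial (Fin (m + 2)) A) :=
    dotProduct_single_one X r
  have hbracket := dotProduct_mul_bracket_mem _ _ hσ hU hV (Pi.single s 1)
  have hgenerator := dotProduct_mul_dotProduct_generatorMap_sub_mem _ _ _ _ hσ hU hV
    (C ∘ τ) (Pi.single t 1)
  rw [hdot] at hbracket hgenerator
  rw [generatorMap_map] at hgenerator
  convert Ideal.add_mem _ (Ideal.mul_mem_left _ (X s) hgenerator)
    (Ideal.mul_mem_left _ (bracket (σ.map C) (C ∘ τ) (Pi.single t 1)) hbracket) using 1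
  ring

theorem mul_X_dotProduct_generatorMap_mem_symIdeal (τ : Fin (m + 2) → A)
    {r : MvPolynomial (Fin (m + 2)) A} (hr : r ∈ idealOfVars (Fin (m + 2)) A ^ 2) :
    r * (X ⬝ᵥ (C ∘ generatorMap σ U V τ)) ∈ symIdeal σ U V := by
  rw [idealOfVars, pow_two, Ideal.span_mul_span'] at hr
  induction hr using Submodule.span_induction with
  | mem r hr =>
    obtain ⟨_, ⟨s, rfl⟩, _, ⟨t, rfl⟩, rfl⟩ := hr
    exact X_mul_X_mul_X_dotProduct_generatorMap_mem_symIdeal τ s t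
  | zero => simp
  | add r r' _ _ hr hr' => exact add_mul r r' _ ▸ add_mem hr hr'
  | smul a r _ hr => exact smul_mul_assoc a r (X ⬝ᵥ (C ∘ generatorMap σ U V τ)) ▸
      Submodule.smul_mem _ a hr

end LinearPart

section Strand

open Matrix

variable {k : Type} [Field k] {d n : ℕ}

/-- The element `∑ x_t a_t` of `B` with coefficient vector `a`: the `T`-linear parametrization of
the elements of `x`-degree one. -/
def xForm : (Fin d → T k n) →ₗ[T k n] B k d n :=
  Fintype.linearCombination (T k n) (X ∘ Sum.inl)

theorem xForm_apply (a : Fin d → T k n) :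
    xForm a = ∑ t, (X (Sum.inl t) * rename Sum.inr (a t) : B k d n) := by
  rw [xForm, Fintype.linearCombination_apply]
  exact Finset.sum_congr rfl fun t _ => (Algebra.smul_def _ _).trans (mul_comm _ _)

theorem sumAlgEquiv_rename_inr (f : T k n) :
    sumAlgEquiv k (Fin d) (Fin n) (rename Sum.inr f) = C f :=
  DFunLike.congr_fun (sumAlgEquiv_comp_rename_inr k (Fin d) (Fin n)) f

theorem sumAlgEquiv_xForm (a : Fin d → T k n) :
    sumAlgEquiv k (Fin d) (Fin n) (xForm a) = X ⬝ᵥ (C ∘ a) := by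
  simp [xForm_apply, dotProduct, sumAlgEquiv_rename_inr]

theorem isWeightedHomogeneous_rename_inr {f : T k n} {N : ℕ}
    (hf : f.IsHomogeneous N) :
    (rename Sum.inr f : B k d n).IsWeightedHomogeneous (bwt d n) (0, N) := by
  intro u hu
  obtain ⟨v, rfl, hv⟩ := coeff_rename_ne_zero _ _ _ hu
  rw [← hf hv, Finsupp.weight_apply, Finsupp.weight_apply,
    Finsupp.sum_mapDomain_index (by simp) (by simp [add_smul])]
  simp [Finsupp.sum, bwt, Prod.ext_iff, Prod.fst_sum, Prod.snd_sum]

theorem isWeightedHomogeneous_xForm {a : Fin d → T k n} {N : ℕ}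
    (ha : ∀ t, (a t).IsHomogeneous N) : (xForm a).IsWeightedHomogeneous (bwt d n) (1, N) := by
  rw [xForm_apply]
  refine IsWeightedHomogeneous.sum _ _ _ fun t _ => ?_
  simpa [bwt] using (isWeightedHomogeneous_X k (bwt d n) (Sum.inl t)).mul
    (isWeightedHomogeneous_rename_inr (ha t))

theorem weight_wx (u : Fin d ⊕ Fin n →₀ ℕ) :
    Finsupp.weight (wx d n) u = ∑ t, u (Sum.inl t) := by
  simp [Finsupp.weight_apply, Finsupp.sum_fintype, wx]

theorem monomial_mem_range_xForm {u : Fin d ⊕ Fin n →₀ ℕ} (hu : Finsupp.weight (wx d n) u = 1)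
    (c : k) : monomial u c ∈ LinearMap.range (xForm : (Fin d → T k n) →ₗ[T k n] B k d n) := by
  classical
  obtain ⟨t, ht⟩ : ∃ t, u (Sum.inl t) ≠ 0 := by
    by_contra! h
    simp [weight_wx, h] at hu
  obtain ⟨v, rfl⟩ : ∃ v, u = Finsupp.single (Sum.inl t) 1 + v :=
    ⟨_, (add_tsub_cancel_of_le (Finsupp.single_le_iff.2 (Nat.one_le_iff_ne_zero.2 ht))).symm⟩
  have hv (s : Fin d) : v (Sum.inl s) = 0 := by
    have hsum : Finsupp.weight (wx d n) v = 0 := by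
      rw [map_add, Finsupp.weight_single] at hu
      simpa [wx] using hu
    rw [weight_wx, Finset.sum_eq_zero_iff] at hsum
    exact hsum s (Finset.mem_univ s)
  have hrange : (v.support : Set (Fin d ⊕ Fin n)) ⊆ Set.range Sum.inr := by
    rintro (s | j) h
    exacts [absurd (hv s) (Finsupp.mem_support_iff.1 h), ⟨j, rfl⟩]
  refine ⟨Pi.single t (monomial (v.comapDomain Sum.inr Sum.inr_injective.injOn) c), ?_⟩
  rw [xForm, Fintype.linearCombination_apply_single, Algebra.smul_def]
  change rename Sum.inr _ * X (Sum.inl t) = _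
  rw [rename_monomial, Finsupp.mapDomain_comapDomain _ Sum.inr_injective _ hrange, X,
    monomial_mul, mul_one, add_comm]

theorem mem_range_xForm {g : B k d n} (hg : g.IsWeightedHomogeneous (wx d n) 1) :
    g ∈ LinearMap.range (xForm : (Fin d → T k n) →ₗ[T k n] B k d n) := by
  rw [g.as_sum]
  exact Submodule.sum_mem _ fun u hu =>
    monomial_mem_range_xForm (hg (mem_support_iff.1 hu)) _

/-- The map from `T^d` onto the strand `S_1`, a coordinate vector being sent to the class of an
`x_t`. -/
def strandMap (L : Ideal (B k d n)) : (Fin d → T k n) →ₗ[T k n] B k d n ⧸ L :=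
  (Ideal.Quotient.mkₐ (T k n) L).toLinearMap ∘ₗ xForm

theorem strandMap_apply (L : Ideal (B k d n)) (a : Fin d → T k n) :
    strandMap L a = Ideal.Quotient.mk L (xForm a) := rfl

theorem SxDegZ_one (L : Ideal (B k d n)) : SxDegZ k d n L 1 = LinearMap.range (strandMap L) := by
  rw [SxDegZ, if_pos zero_le_one, SxDeg]
  apply le_antisymm
  · rw [Submodule.span_le]
    rintro _ ⟨g, hg, rfl⟩
    obtain ⟨a, rfl⟩ := mem_range_xForm hg
    exact ⟨a, rfl⟩
  · rintro _ ⟨a, rfl⟩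
    rw [strandMap, LinearMap.comp_apply, xForm, Fintype.linearCombination_apply, map_sum]
    simp only [map_smul]
    exact Submodule.sum_mem _ fun t _ => Submodule.smul_mem _ _
      (Submodule.subset_span ⟨_, isWeightedHomogeneous_X k (wx d n) (Sum.inl t), rfl⟩)

theorem mk_mem_H0_iff (L : Ideal (B k d n)) (b : B k d n) :
    Ideal.Quotient.mk L b ∈ H0 k d n L ↔ ∃ N, ∀ r ∈ mxB k d n ^ N, r * b ∈ L := by
  have hmono : Monotone fun N : ℕ => Submodule.torsionBySet (B k d n) (B k d n ⧸ L)
      ((mxB k d n ^ N : Ideal (B k d n)) : Set (B k d n)) := fun N N' hN =>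
    Submodule.torsionBySet_le_torsionBySet_of_subset (Ideal.pow_le_pow_right hN)
  simp only [H0, Submodule.mem_iSup_of_directed _ hmono.directed_le,
    Submodule.mem_torsionBySet_iff, SetCoe.forall, SetLike.mem_coe]
  refine exists_congr fun N => forall₂_congr fun r _ => ?_
  exact Ideal.Quotient.eq_zero_iff_mem (a := r * b)

theorem map_mxB : (mxB k d n).map (sumAlgEquiv k (Fin d) (Fin n)) =
    idealOfVars (Fin d) (T k n) := by
  rw [mxB, Ideal.map_span, ← Set.range_comp, idealOfVars]
  congr 2
  ext t : 1
  simp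

theorem forall_mem_pow_mul_mem_iff_map {R S F : Type*} [CommRing R] [CommRing S] [EquivLike F R S]
    [RingEquivClass F R S] (e : F) (I J : Ideal R) (z : R) (N : ℕ) :
    (∀ r ∈ I ^ N, r * z ∈ J) ↔ ∀ r ∈ I.map e ^ N, r * e z ∈ J.map e := by
  refine ⟨mul_mem_map_of_mem_pow_map (e : R →+* S), fun h r hr => ?_⟩
  rw [← Ideal.map_pow] at h
  have hmem := h _ (Ideal.mem_map_of_mem e hr)
  rwa [← map_mul, ← Ideal.mem_comap, Ideal.comap_map_of_bijective e (EquivLike.bijective e)] at hmem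

theorem strandMap_mem_H0_iff (L : Ideal (B k d n)) (a : Fin d → T k n) :
    strandMap L a ∈ H0 k d n L ↔ ∃ N, ∀ r ∈ idealOfVars (Fin d) (T k n) ^ N,
      r * (X ⬝ᵥ (C ∘ a)) ∈ L.map (sumAlgEquiv k (Fin d) (Fin n)) := by
  rw [strandMap_apply, mk_mem_H0_iff]
  simp only [forall_mem_pow_mul_mem_iff_map (sumAlgEquiv k (Fin d) (Fin n)), map_mxB,
    sumAlgEquiv_xForm]

theorem strandMap_eq_zero_iff (L : Ideal (B k d n)) (a : Fin d → T k n) :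
    strandMap L a = 0 ↔ X ⬝ᵥ (C ∘ a) ∈ L.map (sumAlgEquiv k (Fin d) (Fin n)) := by
  rw [strandMap_apply, Ideal.Quotient.eq_zero_iff_mem, ← sumAlgEquiv_xForm]
  exact (Ideal.apply_mem_of_equiv_iff (f := (sumAlgEquiv k (Fin d) (Fin n)).toRingEquiv)).symm

variable {m : ℕ} {σ : Matrix (Fin (m + 2)) (Fin m) (T k n)}
  {U V : Matrix (Fin (m + 2)) (Fin (m + 2)) (T k n)} {L : Ideal (B k (m + 2) n)}
  (hL : L.map (sumAlgEquiv k (Fin (m + 2)) (Fin n)) = symIdeal σ U V)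
include hL

theorem strandMap_eq_zero_iff_exists_eq_mulVec {a : Fin (m + 2) → T k n} :
    strandMap L a = 0 ↔ ∃ p, a = σ *ᵥ p := by
  rw [strandMap_eq_zero_iff, hL, X_dotProduct_mem_symIdeal_iff]

theorem strandMap_generatorMap_mem_H0 (τ : Fin (m + 2) → T k n) :
    strandMap L (generatorMap σ U V τ) ∈ H0 k (m + 2) n L := by
  rw [strandMap_mem_H0_iff, hL]
  exact ⟨2, fun r hr => mul_X_dotProduct_generatorMap_mem_symIdeal τ hr⟩

variable (hσ : 3 ≤ (bracketIdeal σ).height) (hheight : (m + 2 : ℕ) ≤ (symIdeal σ U V).height)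
include hσ hheight

theorem AcompZ_one : AcompZ k (m + 2) n L 1 =
    LinearMap.range (strandMap L ∘ₗ generatorMap σ U V) := by
  rw [AcompZ, SxDegZ_one]
  apply le_antisymm
  · rintro _ ⟨hmem, a, rfl⟩
    obtain ⟨N, hN⟩ := (strandMap_mem_H0_iff L a).1 hmem
    rw [hL] at hN
    obtain ⟨τ, p, rfl⟩ :=
      exists_eq_generatorMap_add (IsPairUnmixed.mvPolynomial k n) hσ hheight hN
    have hzero := (strandMap_eq_zero_iff_exists_eq_mulVec hL).2 ⟨p, rfl⟩
    exact ⟨τ, by rw [map_add, hzero, add_zero, LinearMap.comp_apply]⟩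
  · rintro _ ⟨τ, rfl⟩
    exact ⟨strandMap_generatorMap_mem_H0 hL τ, _, rfl⟩

theorem le_card_of_span_eq_AcompZ_one (hσlin : ∀ t j, (σ t j).IsHomogeneous 1)
    {s : Finset (B k (m + 2) n ⧸ L)}
    (hs : Submodule.span (T k n) (s : Set (B k (m + 2) n ⧸ L)) = AcompZ k (m + 2) n L 1) :
    m + 2 ≤ s.card := by
  rw [AcompZ_one hL hσ hheight] at hs
  refine (Fintype.card_fin (m + 2)).ge.trans
    (card_le_card_of_span_eq_range (F := strandMap L ∘ₗ generatorMap σ U V) constantCoeff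
      (fun τ hτ => ?_) hs)
  obtain ⟨p, hp⟩ := (strandMap_eq_zero_iff_exists_eq_mulVec hL).1 hτ
  obtain ⟨q, rfl⟩ := exists_eq_mulVec_of_generatorMap_eq (le_trans (by norm_num) hσ) hheight hp
  have hconst (t : Fin (m + 2)) (j : Fin m) : constantCoeff (σ t j) = 0 :=
    (hσlin t j).coeff_eq_zero (by simp)
  ext t : 1
  simp [mulVec, dotProduct, hconst]

end Strand

section Presentation

open Matrix

variable {k : Type} [Field k] {d n m : ℕ}

theorem AcompZ_one_eq_span {σ : Matrix (Fin (m + 2)) (Fin m) (T k n)}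
    {U V : Matrix (Fin (m + 2)) (Fin (m + 2)) (T k n)} {L : Ideal (B k (m + 2) n)}
    (hL : L.map (sumAlgEquiv k (Fin (m + 2)) (Fin n)) = symIdeal σ U V)
    (hσ : 3 ≤ (bracketIdeal σ).height) (hheight : (m + 2 : ℕ) ≤ (symIdeal σ U V).height) :
    AcompZ k (m + 2) n L 1 = Submodule.span (T k n)
      (Set.range fun i => Ideal.Quotient.mk L (xForm (generatorMap σ U V (Pi.single i 1)))) := by
  rw [AcompZ_one hL hσ hheight, LinearMap.range_eq_map, ← (Pi.basisFun (T k n) _).span_eq,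
    Submodule.map_span, ← Set.range_comp]
  simp only [Function.comp_def, Pi.basisFun_apply, LinearMap.comp_apply, strandMap_apply]

theorem le_height_of_htGE {R : Type} [CommRing R] {I : Ideal R} {c : ℕ} (h : htGE I c) :
    (c : ℕ∞) ≤ I.height := by
  rw [Ideal.height_eq_inf_minimalPrimes]
  refine le_iInf₂ fun P hP => ?_
  have := hP.1.1
  have hdim := h P hP.1.1 hP.1.2
  rw [IsLocalization.AtPrime.ringKrullDim_eq_height P] at hdim
  exact WithBot.coe_le_coe.1 hdim

theorem minorsIdeal_le_bracketIdeal {R : Type} [CommRing R]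
    (σ : Matrix (Fin (m + 2)) (Fin m) R) : minorsIdeal σ m ≤ bracketIdeal σ := by
  rw [minorsIdeal, Ideal.span_le]
  rintro _ ⟨f, g, rfl⟩
  exact det_submatrix_mem_bracketIdeal σ f g

/-- The element `∑ y_j v_j` of `B` with coefficient vector `v` over `R = k[x_1,…,x_d]`. -/
def yForm (v : Fin n → MvPolynomial (Fin d) k) : B k d n :=
  ∑ j, rename Sum.inl (v j) * X (Sum.inr j)

theorem exists_sumAlgEquiv_yForm_eq {q : Fin n → MvPolynomial (Fin d) k}
    (hq : ∀ j, (q j).IsHomogeneous 2) :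
    ∃ U : Matrix (Fin d) (Fin d) (T k n), (∀ s r, (U s r).IsHomogeneous 1) ∧
      sumAlgEquiv k (Fin d) (Fin n) (yForm q) = X ⬝ᵥ U.map C *ᵥ X := by
  choose c hc using fun j => exists_eq_sum_C_mul_X_mul_X (hq j)
  refine ⟨of fun s r => ∑ j, C (c j s r) * X j, fun s r => ?_, ?_⟩
  · rw [of_apply]
    exact IsHomogeneous.sum _ _ _ fun j _ => isHomogeneous_C_mul_X (c j s r) j
  · simp only [yForm, hc, map_sum, map_mul, rename_C, rename_X, sumAlgEquiv_X_inl,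
      sumAlgEquiv_X_inr, sumAlgEquiv_C_inl, dotProduct, mulVec, Matrix.map_apply, of_apply,
      Finset.sum_mul, Finset.mul_sum]
    rw [Finset.sum_comm]
    refine Finset.sum_congr rfl fun s _ => ?_
    rw [Finset.sum_comm]
    exact Finset.sum_congr rfl fun r _ => Finset.sum_congr rfl fun j _ => by ring

theorem map_span_range_eq_symIdeal {ℓ : Fin (m + 2) → B k (m + 2) n}
    {σ : Matrix (Fin (m + 2)) (Fin m) (T k n)} {U V : Matrix (Fin (m + 2)) (Fin (m + 2)) (T k n)}
    (hσ : ∀ j : Fin m, ℓ j.castSucc.castSucc = xForm (σ.col j))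
    (hU : sumAlgEquiv k (Fin (m + 2)) (Fin n) (ℓ (Fin.last m).castSucc) = X ⬝ᵥ U.map C *ᵥ X)
    (hV : sumAlgEquiv k (Fin (m + 2)) (Fin n) (ℓ (Fin.last (m + 1))) = X ⬝ᵥ V.map C *ᵥ X) :
    (Ideal.span (Set.range ℓ)).map (sumAlgEquiv k (Fin (m + 2)) (Fin n)) = symIdeal σ U V := by
  rw [Ideal.map_span, symIdeal, ← Set.range_comp]
  congr 1
  ext z
  have hlinear (j : Fin m) : X ⬝ᵥ (C ∘ σ.col j) = (X ᵥ* σ.map C) j := rfl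
  simp only [Set.mem_range, Fin.exists_fin_succ', Function.comp_apply, hσ, hU, hV,
    sumAlgEquiv_xForm, hlinear, Set.mem_union, Set.mem_insert_iff, Set.mem_singleton_iff, or_assoc,
    eq_comm]

variable (k d n) in
/-- `B = R[y_1,…,y_n]` as a polynomial ring over `R = k[x_1,…,x_d]`. -/
def sumCommAlgEquiv : B k d n ≃ₐ[k] MvPolynomial (Fin n) (MvPolynomial (Fin d) k) :=
  (renameEquiv k (Equiv.sumComm (Fin d) (Fin n))).trans (sumAlgEquiv k (Fin n) (Fin d))

theorem sumCommAlgEquiv_yForm (v : Fin n → MvPolynomial (Fin d) k) :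
    sumCommAlgEquiv k d n (yForm v) = linearForm _ v := by
  have hC (f : MvPolynomial (Fin d) k) : sumCommAlgEquiv k d n (rename Sum.inl f) = C f := by
    rw [sumCommAlgEquiv, AlgEquiv.trans_apply, renameEquiv_apply, rename_rename]
    exact sumAlgEquiv_rename_inr f
  have hX (j : Fin n) : sumCommAlgEquiv k d n (X (Sum.inr j)) = X j := by
    simp [sumCommAlgEquiv]
  simp only [yForm, linearForm_apply, map_sum, map_mul, hC, hX]

theorem le_height_span_range_yForm_col {e : ℕ} {E : Type*} [AddCommGroup E]
    [Module (MvPolynomial (Fin d) k) E]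
    {φ : Matrix (Fin (d + e)) (Fin d) (MvPolynomial (Fin d) k)}
    (hφ : Function.Injective φ.mulVecLin)
    {π : (Fin (d + e) → MvPolynomial (Fin d) k) →ₗ[MvPolynomial (Fin d) k] E}
    (hπ : Function.Surjective π) (hker : LinearMap.ker π = LinearMap.range φ.mulVecLin)
    (hG : ∀ (p : Ideal (MvPolynomial (Fin d) k)) (_ : p.IsPrime) (c : ℕ),
      ringKrullDim (Localization.AtPrime p) = (c : WithBot ℕ∞) → 1 ≤ c → c ≤ d - 1 →
      ∃ s : Finset (LocalizedModule p.primeCompl E), s.card ≤ c + e - 1 ∧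
        Submodule.span (Localization.AtPrime p)
          (s : Set (LocalizedModule p.primeCompl E)) = ⊤) :
    (d : ℕ∞) ≤ (Ideal.span (Set.range fun i => yForm (φ.col i))).height := by
  rw [← RingEquiv.height_map (sumCommAlgEquiv k d (d + e)).toRingEquiv, Ideal.map_span,
    ← Set.range_comp, Ideal.height_eq_inf_minimalPrimes]
  refine le_iInf₂ fun P hP => ?_
  have := hP.1.1
  refine le_height_of_forall_linearForm_col_mem hφ hπ hker hG fun i => ?_
  rw [← sumCommAlgEquiv_yForm]
  exact hP.1.2 (Ideal.subset_span ⟨i, rfl⟩)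

end Presentation

theorem A1_generators
    (d e : ℕ) (hd : 3 ≤ d)
    (E : Type) [AddCommGroup E] [Module (MvPolynomial (Fin d) k) E]
    [Module.Finite (MvPolynomial (Fin d) k) E]
    -- `E` is torsion-free
    (htf : Submodule.torsion (MvPolynomial (Fin d) k) E = ⊥)
    -- `0 → R^d →φ R^{d+e} →π E → 0` is a (minimal) free resolution, so `pd E = 1`,
    -- `rank E = e`
    (φ : Matrix (Fin (d + e)) (Fin d) (MvPolynomial (Fin d) k))
    (hinj : Function.Injective φ.mulVecLin)
    (π : (Fin (d + e) → MvPolynomial (Fin d) k) →ₗ[MvPolynomial (Fin d) k] E)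
    (hsurj : Function.Surjective π)
    (hker : LinearMap.ker π = LinearMap.range φ.mulVecLin)
    -- `φ = [φ′ | φ″]`: the first `d−2` columns are linear, the last two are quadrics
    (hdeg : ∀ (i : Fin (d + e)) (j : Fin d),
      ((j : ℕ) < d - 2 → φ i j ∈ homogeneousSubmodule (Fin d) k 1) ∧
      (d - 2 ≤ (j : ℕ) → φ i j ∈ homogeneousSubmodule (Fin d) k 2))
    -- `I_1(φ) = (x_1,…,x_d)`
    (hI1 : Ideal.span {r : MvPolynomial (Fin d) k | ∃ i j, φ i j = r} =
      Ideal.span (Set.range X))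
    -- `E` is minimally generated by `μ(E) = d+e` elements
    (hμ : ∀ s : Finset E, Submodule.span (MvPolynomial (Fin d) k) (s : Set E) = ⊤ →
      d + e ≤ s.card)
    -- `E` satisfies `G_d`
    (hGd : ∀ (p : Ideal (MvPolynomial (Fin d) k)) (_ : p.IsPrime) (c : ℕ),
      ringKrullDim (Localization.AtPrime p) = (c : WithBot ℕ∞) → 1 ≤ c → c ≤ d - 1 →
      ∃ s : Finset (LocalizedModule p.primeCompl E), s.card ≤ c + e - 1 ∧
        Submodule.span (Localization.AtPrime p)
          (s : Set (LocalizedModule p.primeCompl E)) = ⊤)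
    -- the defining ideal `L` of the symmetric algebra: `[ℓ_1 … ℓ_d] = [y_1 … y_{d+e}]·φ`
    (ℓ : Fin d → B k d (d + e))
    (hℓ : ∀ i, ℓ i = ∑ j, (rename Sum.inl (φ j i)) * X (Sum.inr j))
    (L : Ideal (B k d (d + e))) (hL : L = Ideal.span (Set.range ℓ))
    (σ : Matrix (Fin d) (Fin (d - 2)) (T k (d + e)))
    (hσlin : ∀ t j, σ t j ∈ homogeneousSubmodule (Fin (d + e)) k 1)
    (hσ : ∀ j : Fin (d - 2),
      ℓ (Fin.castLE (by omega) j) =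
        ∑ t : Fin d, X (Sum.inl t) * (rename Sum.inr (σ t j) : B k d (d + e)))
    -- `ht I(σ) = 3`
    (hht3 : htGE (minorsIdeal σ (d - 2)) 3)
    (hht3' : ¬ htGE (minorsIdeal σ (d - 2)) 4) :
    ∃ g : Fin d → B k d (d + e),
      (∀ i, g i ∈ weightedHomogeneousSubmodule k (bwt d (d + e)) (1, 2 * d - 2)) ∧
      AcompZ k d (d + e) L 1 =
        Submodule.span (T k (d + e)) (Set.range fun i => Ideal.Quotient.mk L (g i)) ∧
      (∀ s : Finset (B k d (d + e) ⧸ L),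
        Submodule.span (T k (d + e)) (s : Set (B k d (d + e) ⧸ L)) =
          AcompZ k d (d + e) L 1 → d ≤ s.card) := by
  obtain ⟨m, rfl⟩ : ∃ m, d = m + 2 := ⟨d - 2, by omega⟩
  obtain rfl : ℓ = fun i => yForm (φ.col i) := funext hℓ
  obtain ⟨U, hU, hU_eq⟩ := exists_sumAlgEquiv_yForm_eq (q := φ.col (Fin.last m).castSucc)
    fun i => (hdeg i _).2 le_rfl
  obtain ⟨V, hV, hV_eq⟩ := exists_sumAlgEquiv_yForm_eq (q := φ.col (Fin.last (m + 1)))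
    fun i => (hdeg i _).2 (Nat.le_succ m)
  have hL_map : L.map (sumAlgEquiv k (Fin (m + 2)) (Fin (m + 2 + e))) = symIdeal σ U V :=
    hL ▸ map_span_range_eq_symIdeal (fun j => (hσ j).trans (xForm_apply (σ.col j)).symm)
      hU_eq hV_eq
  have hσ_height : 3 ≤ (bracketIdeal σ).height :=
    (le_height_of_htGE hht3).trans (Ideal.height_mono (minorsIdeal_le_bracketIdeal σ))
  have hL_height : (m + 2 : ℕ) ≤ (symIdeal σ U V).height := by
    rw [← hL_map, hL]
    exact (le_height_span_range_yForm_col hinj hsurj hker hGd).trans_eq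
      (RingEquiv.height_map (sumAlgEquiv k (Fin (m + 2)) (Fin (m + 2 + e))).toRingEquiv _).symm
  exact ⟨fun i => xForm (generatorMap σ U V (Pi.single i 1)),
    fun i => isWeightedHomogeneous_xForm
      (isHomogeneous_generatorMap hσlin hU hV (isHomogeneous_single_one i)),
    AcompZ_one_eq_span hL_map hσ_height hL_height,
    fun s hs => le_card_of_span_eq_AcompZ_one hL_map hσ_height hL_height hσlin hs⟩

end Stmt10
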